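/- arXiv:1602.01505 — 2 statements merged into one kernel-verified Lean document; each statement's English description precedes it below -/
import Mathlib

section
/- Let d ≥ 5 and let 𝒰 be the uniform spanning forest of Z^d. There exist constants c₁ > 0 and C₂, depending only on d, such that for all λ > 0 and all integers n ≥ 1, P( |B_𝒰(0,n)| ≥ λ n² ) ≤ C₂ e^{-c₁ λ}, where B_𝒰(0,n) is the ball of radius n around 0 in the intrinsic (graph) metric of 𝒰. -/
open MeasureTheory
open scoped ENNReal Classical

namespace USFPaper

/-- Vertices of the nearest-neighbour integer lattice `ℤ^d`. -/
abbrev V (d : ℕ) := Fin d → ℤ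

variable {d : ℕ}

/-- Nearest-neighbour adjacency in `ℤ^d`. -/
def adj (x y : V d) : Prop := (∑ i, |x i - y i|) = 1

/-- The cube `Q(x,r) = { y : ‖x - y‖_∞ ≤ r }`. -/
def cube (x : V d) (r : ℕ) : Set (V d) := { y | ∀ i, |y i - x i| ≤ (r : ℤ) }

/-- Euclidean distance on `ℤ^d`. -/
noncomputable def eudist (x y : V d) : ℝ := Real.sqrt (∑ i, ((x i : ℝ) - (y i : ℝ)) ^ 2)

/-- Configurations: subgraphs of `ℤ^d`, encoded by the indicator of their edge set
(on unordered pairs of vertices). -/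
abbrev Config (d : ℕ) := Sym2 (V d) → Bool

/-- `e` is an edge of the lattice `ℤ^d`. -/
def isLatticeEdge (e : Sym2 (V d)) : Prop := ∃ a b : V d, e = s(a, b) ∧ adj a b

/-- Spanning trees of the wired graph `G_A^W` obtained from `ℤ^d` by collapsing the
complement of the finite set `A` to a single vertex: sets `T` of lattice edges, each
with at least one endpoint in `A`, with exactly `|A|` edges, and such that every
vertex of `A` is joined by a path of edges of `T` to the (collapsed) complement
of `A`. -/
def wiredSpanningTrees (A : Set (V d)) : Set (Set (Sym2 (V d))) :=
  { T | (∀ e ∈ T, isLatticeEdge e ∧ ∃ v ∈ e, v ∈ A) ∧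
        T.ncard = A.ncard ∧
        ∀ x ∈ A, ∃ l : List (V d),
          l.Chain' (fun u w => adj u w ∧ s(u, w) ∈ T) ∧
          l.head? = some x ∧ ∃ y, l.getLast? = some y ∧ y ∉ A }

/-- The cylinder event prescribing the configuration on the finite edge set `K`. -/
def cylEvent (K : Finset (Sym2 (V d))) (f : Sym2 (V d) → Bool) : Set (Config d) :=
  { ω | ∀ e ∈ K, ω e = f e }

/-- `μ` is the weak limit of the uniform spanning trees of the wired graphs of the
exhausting sequence `Dseq`: for every cylinder event, the proportion of wired spanning
trees of `Dseq r` compatible with it converges to its `μ`-probability. -/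
def IsWiredLimit (Dseq : ℕ → Set (V d)) (μ : Measure (Config d)) : Prop :=
  ∀ (K : Finset (Sym2 (V d))) (f : Sym2 (V d) → Bool),
    Filter.Tendsto
      (fun r : ℕ =>
        ((Set.ncard { T ∈ wiredSpanningTrees (Dseq r) |
            ∀ e ∈ K, (e ∈ T ↔ f e = true) } : ℝ) /
         (Set.ncard (wiredSpanningTrees (Dseq r)) : ℝ)))
      Filter.atTop
      (nhds ((μ (cylEvent K f)).toReal))

/-- `μ` is the uniform spanning forest of `ℤ^d`: the weak limit of the uniform
spanning trees of the (wired) boxes `Q_r`. -/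
def IsUSF (μ : Measure (Config d)) : Prop :=
  IsWiredLimit (fun r => cube (0 : V d) r) μ

/-- The ball `B_𝒰(0,n)` of radius `n` about the origin in the intrinsic (graph)
metric of the configuration `ω`. -/
def ballU (ω : Config d) (n : ℕ) : Set (V d) :=
  { y | ∃ l : List (V d),
      l.Chain' (fun u w => adj u w ∧ ω s(u, w) = true) ∧
      l.head? = some 0 ∧ l.getLast? = some y ∧ l.length ≤ n + 1 }

/-- The component `𝒰₀` of the origin in the configuration `ω`, for a domain `D`:
all vertices joined to `0` by a path of open edges not leaving `D` (i.e. not passing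
through the collapsed vertex `r_D`). -/
def comp0In (D : Set (V d)) (ω : Config d) : Set (V d) :=
  { y | ∃ l : List (V d),
      l.Chain' (fun u w => adj u w ∧ ω s(u, w) = true) ∧
      l.head? = some 0 ∧ l.getLast? = some y ∧ ∀ v ∈ l, v ∈ D }


structure Gph (W : Type) [DecidableEq W] where
  nb : W → Finset W
  symm : ∀ x y, x ∈ nb y → y ∈ nb x
  irrefl : ∀ x, x ∉ nb x
  deg : ℕ
  hdeg : ∀ x, (nb x).card = deg
  st : W → W
  st_mem : ∀ x, st x ∈ nb x
  st_esc : ∀ (D : Finset W) (x : W), ∃ k : ℕ, st^[k] x ∉ D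

section abs
variable {W : Type} [DecidableEq W] (g : Gph W)

def isF (D : Finset W) (F : W → W) : Prop :=
  (∀ x, x ∉ D → F x = x) ∧ (∀ x, x ∈ D → F x ∈ g.nb x) ∧ ∀ x, ∃ k : ℕ, F^[k] x ∉ D

theorem isF_finite (D : Finset W) : {F | isF g D F}.Finite := by
  have hinj : Function.Injective (fun (F : {F | isF g D F}) (x : D) =>
      (⟨F.1 x.1, Finset.mem_biUnion.2 ⟨x.1, x.2, F.2.2.1 x.1 x.2⟩⟩ : (D.biUnion g.nb : Finset W))) := by
    rintro ⟨F, hF⟩ ⟨F', hF'⟩ h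
    ext x
    by_cases hx : x ∈ D
    · have := congrFun h ⟨x, hx⟩
      simpa using this
    · simp [hF.1 x hx, hF'.1 x hx]
  exact Set.finite_coe_iff.1 (Finite.of_injective _ hinj)


noncomputable def FF (D : Finset W) : Finset (W → W) := (isF_finite g D).toFinset

theorem mem_FF {D : Finset W} {F : W → W} : F ∈ FF g D ↔ isF g D F := by simp [FF]

noncomputable def tau (D : Finset W) : ℝ := ((FF g D).card : ℝ)

def reach (F : W → W) (x : W) (R : Set W) : Prop := ∃ k : ℕ, F^[k] x ∈ R

theorem tau_pos (D : Finset W) : 0 < tau g D := by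
  unfold tau
  have : (FF g D).Nonempty := by
    refine ⟨fun x => if x ∈ D then g.st x else x, ?_⟩
    rw [mem_FF]
    refine ⟨fun x hx => by simp [hx], fun x hx => by simp [hx, g.st_mem], fun x => ?_⟩
    by_contra hcon
    push Not at hcon
    obtain ⟨k, hk⟩ := g.st_esc D x
    have : ∀ j, (fun x => if x ∈ D then g.st x else x)^[j] x = g.st^[j] x := by
      intro j
      induction j with
      | zero => rfl
      | succ j ih =>
        have h1 := hcon j
        rw [Function.iterate_succ_apply', Function.iterate_succ_apply', ih]
        rw [ih] at h1
        simp [h1]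
    exact hk (this k ▸ hcon k)
  exact_mod_cast this.card_pos

theorem deg_pos [Nonempty W] : 0 < g.deg := by
  obtain ⟨x⟩ := ‹Nonempty W›
  rw [← g.hdeg x]
  exact Finset.card_pos.2 ⟨_, g.st_mem x⟩

theorem agree_iter {F F' : W → W} {L : Set W} (h : ∀ w, w ∉ L → F' w = F w) (x : W) (k : ℕ)
    (hk : ∀ j < k, F^[j] x ∉ L) : F'^[k] x = F^[k] x := by
  induction k with
  | zero => rfl
  | succ k ih =>
    rw [Function.iterate_succ_apply', Function.iterate_succ_apply',
      ih (fun j hj => hk j (by omega)), h _ (hk k (by omega))]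

theorem iter_fix {D : Finset W} {F : W → W} (hF : isF g D F) {x : W} (hx : x ∉ D) (k : ℕ) :
    F^[k] x = x := Function.iterate_fixed (hF.1 x hx) k

theorem no_cycle {D : Finset W} {F : W → W} (hF : isF g D F) {x : W} {k : ℕ}
    (hk : F^[k + 1] x = x) : x ∉ D := by
  obtain ⟨j, hj⟩ := hF.2.2 x
  have h1 : F^[(k + 1) * j] x = x := by
    rw [Function.iterate_mul]
    exact Function.iterate_fixed hk j
  have h2 : (k + 1) * j = k * j + j := by ring
  rw [h2, Function.iterate_add_apply, iter_fix g hF hj] at h1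
  rwa [h1] at hj

theorem cut_mem {D : Finset W} {F : W → W} (hF : isF g D F) {u : W} (hu : u ∈ D) :
    isF g (D.erase u) (Function.update F u u) := by
  refine ⟨fun x hx => ?_, fun x hx => ?_, fun x => ?_⟩
  · by_cases hxu : x = u
    · subst hxu; simp
    · rw [Function.update_of_ne hxu]
      exact hF.1 x (fun h => hx (Finset.mem_erase.2 ⟨hxu, h⟩))
  · rw [Function.update_of_ne (Finset.ne_of_mem_erase hx)]
    exact hF.2.1 x (Finset.mem_of_mem_erase hx)
  · by_contra hcon
    push Not at hcon
    obtain ⟨k, hk⟩ := hF.2.2 x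
    have hag := agree_iter (F := Function.update F u u) (F' := F) (L := {u})
      (fun w hw => (Function.update_of_ne hw _ _).symm) x k
      (fun j _ => Finset.ne_of_mem_erase (hcon j))
    rw [hag] at hk
    exact hk (Finset.mem_of_mem_erase (hcon k))

theorem cut_not_reach {D : Finset W} {F : W → W} (hF : isF g D F) {u : W} (hu : u ∈ D) :
    ¬ reach (Function.update F u u) (F u) {u} := by
  intro h
  have h' : ∃ k : ℕ, (Function.update F u u)^[k] (F u) = u := h
  have hag := agree_iter (F := Function.update F u u) (F' := F) (L := {u})
      (fun w hw => (Function.update_of_ne hw _ _).symm) (F u) (Nat.find h')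
      (fun j hj => Nat.find_min h' hj)
  rw [Nat.find_spec h', ← Function.iterate_succ_apply] at hag
  exact no_cycle g hF hag hu

theorem glue_mem {D : Finset W} {F : W → W} {u p : W} (hu : u ∈ D) (hF : isF g (D.erase u) F)
    (hp : p ∈ g.nb u) (hr : ¬ reach F p {u}) : isF g D (Function.update F u p) := by
  have hne : ∀ w, w ∉ ({u} : Set W) → Function.update F u p w = F w :=
    fun w hw => Function.update_of_ne hw _ _
  refine ⟨fun x hx => ?_, fun x hx => ?_, fun x => ?_⟩
  · have hxu : x ≠ u := fun h => hx (h ▸ hu)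
    rw [Function.update_of_ne hxu]
    exact hF.1 x (fun h => hx (Finset.mem_of_mem_erase h))
  · by_cases hxu : x = u
    · subst hxu; simpa using hp
    · rw [Function.update_of_ne hxu]
      exact hF.2.1 x (Finset.mem_erase.2 ⟨hxu, hx⟩)
  · by_cases h : ∃ k : ℕ, F^[k] x = u
    · have h1 := agree_iter hne x (Nat.find h) (fun j hj => Nat.find_min h hj)
      rw [Nat.find_spec h] at h1
      obtain ⟨i, hi⟩ := hF.2.2 p
      have h2 := agree_iter hne p i (fun j _ hj => hr ⟨j, hj⟩)
      refine ⟨i + (1 + Nat.find h), ?_⟩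
      rw [Function.iterate_add_apply, Function.iterate_add_apply, h1]
      simp only [Function.iterate_one, Function.update_self]
      rw [h2]
      intro hc
      exact hi (Finset.mem_erase.2 ⟨fun hj => hr ⟨i, hj⟩, hc⟩)
    · push Not at h
      obtain ⟨i, hi⟩ := hF.2.2 x
      refine ⟨i, ?_⟩
      rw [agree_iter hne x i (fun j _ => h j)]
      intro hc
      exact hi (Finset.mem_erase.2 ⟨h i, hc⟩)

theorem glue2 {D : Finset W} {u : W} (hu : u ∈ D) (ψ : (W → W) → ℝ) :
    ∑ F ∈ FF g D, ψ F = ∑ F ∈ FF g (D.erase u), ∑ p ∈ g.nb u,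
      if reach F p {u} then 0 else ψ (Function.update F u p) := by
  have : ∀ F ∈ FF g (D.erase u), (∑ p ∈ g.nb u,
      if reach F p {u} then 0 else ψ (Function.update F u p))
      = ∑ p ∈ (g.nb u).filter (fun p => ¬ reach F p {u}), ψ (Function.update F u p) := by
    intro F _
    rw [Finset.sum_filter]
    refine Finset.sum_congr rfl fun p _ => ?_
    by_cases h : reach F p {u} <;> simp [h]
  rw [Finset.sum_congr rfl this, Finset.sum_sigma']
  refine Finset.sum_bij' (fun F _ => ⟨Function.update F u u, F u⟩)
    (fun q _ => Function.update q.1 u q.2) ?_ ?_ ?_ ?_ ?_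
  · intro F hF
    rw [mem_FF] at hF
    simp only [Finset.mem_sigma, Finset.mem_filter, mem_FF]
    exact ⟨cut_mem g hF hu, hF.2.1 u hu, cut_not_reach g hF hu⟩
  · rintro ⟨F, p⟩ hq
    simp only [Finset.mem_sigma, Finset.mem_filter, mem_FF] at hq
    rw [mem_FF]
    exact glue_mem g hu hq.1 hq.2.1 hq.2.2
  · intro F hF
    simp
  · rintro ⟨F, p⟩ hq
    simp only [Finset.mem_sigma, Finset.mem_filter, mem_FF] at hq
    have : F u = u := hq.1.1 u (Finset.notMem_erase u D)
    have h2 : Function.update F u u = F := by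
      conv_rhs => rw [← Function.update_eq_self u F, this]
    simp [h2]
  · intro F hF
    simp

theorem glue1 {D : Finset W} {u z : W} (hu : u ∈ D) (hz : z ∉ D) (hzu : z ∈ g.nb u)
    (ψ : (W → W) → ℝ) :
    (∑ F ∈ FF g D, if F u = z then ψ F else 0)
      = ∑ F ∈ FF g (D.erase u), ψ (Function.update F u z) := by
  rw [glue2 g hu]
  refine Finset.sum_congr rfl fun F hF => ?_
  rw [mem_FF] at hF
  rw [Finset.sum_eq_single z]
  · have : ¬ reach F z {u} := by
      rintro ⟨k, hk⟩
      rw [iter_fix g hF (fun h => hz (Finset.mem_of_mem_erase h))] at hk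
      exact hz (by rw [Set.mem_singleton_iff.1 hk]; exact hu)
    simp [this]
  · intro p _ hp
    simp [hp]
  · intro h; exact absurd hzu h

theorem tau_le (D : Finset W) {u : W} (hu : u ∈ D) :
    tau g D ≤ g.deg * tau g (D.erase u) := by
  have h := glue2 g hu (fun _ => 1)
  have h1 : tau g D = ∑ F ∈ FF g D, (1 : ℝ) := by simp [tau]
  rw [h1, h]
  calc _ ≤ ∑ F ∈ FF g (D.erase u), (g.deg : ℝ) := by
        refine Finset.sum_le_sum fun F _ => ?_
        rw [← g.hdeg u, Finset.card_eq_sum_ones]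
        push_cast
        refine Finset.sum_le_sum fun p _ => ?_
        split_ifs <;> norm_num
    _ = _ := by simp [tau, mul_comm]

end abs

section abs2
variable {W : Type} [DecidableEq W] (g : Gph W)

noncomputable def hit (D : Finset W) (R : Set W) (x : W) : ℝ :=
  ∑ F ∈ FF g D, if reach F x R then (1 : ℝ) else 0

noncomputable def lap (f : W → ℝ) (x : W) : ℝ := g.deg * f x - ∑ w ∈ g.nb x, f w

theorem reach_unique {D : Finset W} {F : W → W} (hF : isF g D F) {x a b : W} {i j : ℕ}
    (ha : a ∉ D) (hb : b ∉ D) (hi : F^[i] x = a) (hj : F^[j] x = b) : a = b := by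
  have h1 : F^[j + i] x = a := by rw [Function.iterate_add_apply, hi, iter_fix g hF ha]
  have h2 : F^[i + j] x = b := by rw [Function.iterate_add_apply, hj, iter_fix g hF hb]
  rw [add_comm] at h1
  exact h1.symm.trans h2

theorem reach_root {D : Finset W} {F : W → W} (hF : isF g D F) {x : W} (hx : x ∉ D) (R : Set W) :
    reach F x R ↔ x ∈ R := by
  constructor
  · rintro ⟨k, hk⟩
    rwa [iter_fix g hF hx] at hk
  · intro h; exact ⟨0, h⟩

theorem reach_glue {D : Finset W} {F : W → W} {u p w : W} {R : Set W}
    (hF : isF g (D.erase u) F) (hR : ∀ x ∈ D, x ∉ R) (hu : u ∈ D) (hr : ¬ reach F p {u}) :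
    reach (Function.update F u p) w R ↔ reach F w R ∨ (reach F w {u} ∧ reach F p R) := by
  have hne : ∀ w, w ∉ ({u} : Set W) → Function.update F u p w = F w :=
    fun w hw => Function.update_of_ne hw _ _
  have hp : ∀ i, (Function.update F u p)^[i] p = F^[i] p := fun i =>
    agree_iter hne p i (fun j _ hj => hr ⟨j, hj⟩)
  have huD : u ∉ D.erase u := Finset.notMem_erase u D
  by_cases h : ∃ k : ℕ, F^[k] w = u
  · have h1 := agree_iter hne w (Nat.find h) (fun j hj => Nat.find_min h hj)
    rw [Nat.find_spec h] at h1
    have h2 : ∀ i, (Function.update F u p)^[i + (1 + Nat.find h)] w = F^[i] p := by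
      intro i
      rw [Function.iterate_add_apply, Function.iterate_add_apply, h1]
      simp only [Function.iterate_one, Function.update_self]
      exact hp i
    have hnR : ¬ reach F w R := by
      rintro ⟨k, hk⟩
      have hkD : F^[k] w ∉ D.erase u := fun hc => hR _ (Finset.mem_of_mem_erase hc) hk
      have := reach_unique g hF huD hkD (Nat.find_spec h) rfl
      rw [← this] at hk
      exact hR u hu hk
    constructor
    · rintro ⟨k, hk⟩
      right
      refine ⟨h, ?_⟩
      by_cases hkf : k ≤ Nat.find h
      · rw [agree_iter hne w k (fun j hj => Nat.find_min h (by omega))] at hk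
        exact absurd ⟨k, hk⟩ hnR
      · refine ⟨k - (1 + Nat.find h), ?_⟩
        rw [← h2]
        convert hk using 2
        omega
    · rintro (h3 | ⟨-, k, hk⟩)
      · exact absurd h3 hnR
      · exact ⟨k + (1 + Nat.find h), by rw [h2]; exact hk⟩
  · have h' : ¬ reach F w {u} := h
    simp only [h', false_and, or_false]
    push Not at h
    have h3 : ∀ k, (Function.update F u p)^[k] w = F^[k] w := fun k =>
      agree_iter hne w k (fun j _ => h j)
    simp [reach, h3]

theorem harm {D : Finset W} {R : Set W} (hR : ∀ x ∈ D, x ∉ R) {u : W} (hu : u ∈ D) :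
    lap g (hit g D R) u = 0 := by
  have key : ∀ w, hit g D R w = ∑ F ∈ FF g (D.erase u), ∑ p ∈ g.nb u,
      ((1 - (if reach F p {u} then (1 : ℝ) else 0)) * (if reach F w R then (1 : ℝ) else 0)
        + (if reach F w {u} then (1 : ℝ) else 0) * (if reach F p R then (1 : ℝ) else 0)) := by
    intro w
    unfold hit
    rw [glue2 g hu]
    refine Finset.sum_congr rfl fun F hF => Finset.sum_congr rfl fun p hp => ?_
    rw [mem_FF] at hF
    have excl : ∀ q, reach F q {u} → ¬ reach F q R := by
      rintro q ⟨i, hi⟩ ⟨j, hj⟩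
      have hkD : F^[j] q ∉ D.erase u := fun hc => hR _ (Finset.mem_of_mem_erase hc) hj
      have := reach_unique g hF (Finset.notMem_erase u D) hkD hi rfl
      rw [← this] at hj
      exact hR u hu hj
    by_cases h1 : reach F p {u}
    · simp [h1, excl p h1]
    · simp only [h1, if_false, reach_glue g hF hR hu h1]
      by_cases h2 : reach F w {u}
      · simp [h2, excl w h2]
      · simp [h2]
  have key2 : hit g D R u = ∑ F ∈ FF g (D.erase u), ∑ p ∈ g.nb u,
      (if reach F p R then (1 : ℝ) else 0) := by
    rw [key]
    refine Finset.sum_congr rfl fun F hF => Finset.sum_congr rfl fun p hp => ?_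
    rw [mem_FF] at hF
    have h1 : reach F u {u} := ⟨0, rfl⟩
    have h2 : ¬ reach F u R := by
      rw [reach_root g hF (Finset.notMem_erase u D)]
      exact hR u hu
    simp [h1, h2]
  unfold lap
  rw [key2]
  simp_rw [key]
  rw [Finset.sum_comm (s := g.nb u) (t := FF g (D.erase u)), Finset.mul_sum, ← Finset.sum_sub_distrib]
  refine Finset.sum_eq_zero fun F _ => ?_
  simp_rw [Finset.sum_add_distrib, ← Finset.sum_mul, ← Finset.mul_sum]
  rw [Finset.sum_sub_distrib]
  simp only [Finset.sum_const, g.hdeg, nsmul_eq_mul, mul_one]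
  rw [← Finset.sum_mul]
  ring

theorem hit_root (D : Finset W) (R : Set W) {x : W} (hx : x ∉ D) :
    hit g D R x = if x ∈ R then tau g D else 0 := by
  unfold hit
  rw [Finset.sum_congr rfl (fun F hF => by rw [reach_root g ((mem_FF g).1 hF) hx])]
  split_ifs <;> simp [tau]

theorem hit_nonneg (D : Finset W) (R : Set W) (x : W) : 0 ≤ hit g D R x :=
  Finset.sum_nonneg fun F _ => by split_ifs <;> norm_num

theorem hit_le (D : Finset W) (R : Set W) (x : W) : hit g D R x ≤ tau g D := by
  have h1 : tau g D = ∑ F ∈ FF g D, (1 : ℝ) := by simp [tau]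
  rw [h1]
  exact Finset.sum_le_sum fun F _ => by split_ifs <;> norm_num

theorem lap_root {D : Finset W} {z : W} (hz : z ∈ D) :
    lap g (hit g (D.erase z) {z}) z = tau g D := by
  have h1 : tau g D = ∑ F ∈ FF g D, (1 : ℝ) := by simp [tau]
  rw [h1, glue2 g hz]
  unfold lap
  rw [hit_root g _ _ (Finset.notMem_erase z D)]
  simp only [Set.mem_singleton_iff, if_true]
  unfold hit
  rw [Finset.sum_comm (s := g.nb z), tau, mul_comm, ← nsmul_eq_mul, ← Finset.sum_const,
    ← Finset.sum_sub_distrib]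
  refine Finset.sum_congr rfl fun F _ => ?_
  rw [← g.hdeg z, Finset.card_eq_sum_ones]
  push_cast
  rw [← Finset.sum_sub_distrib]
  refine Finset.sum_congr rfl fun p _ => ?_
  split_ifs <;> norm_num

theorem max_princ (D : Finset W) (f : W → ℝ) (h0 : ∀ x, x ∉ D → 0 ≤ f x)
    (hl : ∀ x ∈ D, 0 ≤ lap g f x) : ∀ x, 0 ≤ f x := by
  by_contra hcon
  push Not at hcon
  obtain ⟨x0, hx0⟩ := hcon
  have hx0D : x0 ∈ D := by by_contra h; exact absurd (h0 x0 h) (not_le.2 hx0)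
  obtain ⟨y, hyD, hy⟩ := D.exists_min_image f ⟨x0, hx0D⟩
  have hyneg : f y < 0 := lt_of_le_of_lt (hy x0 hx0D) hx0
  have hall : ∀ w, f y ≤ f w := fun w => by
    by_cases h : w ∈ D
    · exact hy w h
    · exact hyneg.le.trans (h0 w h)
  have step : ∀ v, f v = f y → f (g.st v) = f y := by
    intro v hv
    have hvD : v ∈ D := by by_contra h; have := h0 v h; linarith
    have h1 := hl v hvD
    unfold lap at h1
    by_contra hne
    have hlt : f y < f (g.st v) := lt_of_le_of_ne (hall _) (Ne.symm hne)
    have h2 : ∑ w ∈ g.nb v, f y < ∑ w ∈ g.nb v, f w :=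
      Finset.sum_lt_sum (fun w _ => hall w) ⟨_, g.st_mem v, hlt⟩
    rw [Finset.sum_const, g.hdeg, nsmul_eq_mul] at h2
    rw [hv] at h1
    linarith
  have hit : ∀ k, f (g.st^[k] y) = f y := by
    intro k
    induction k with
    | zero => rfl
    | succ k ih => rw [Function.iterate_succ_apply']; exact step _ ih
  obtain ⟨k, hk⟩ := g.st_esc D y
  have := h0 _ hk
  rw [hit k] at this
  linarith

theorem lap_sub (f h : W → ℝ) (x : W) : lap g (fun y => f y - h y) x = lap g f x - lap g h x := by
  unfold lap; rw [Finset.sum_sub_distrib]; ring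

theorem lap_smul (c : ℝ) (f : W → ℝ) (x : W) : lap g (fun y => c * f y) x = c * lap g f x := by
  unfold lap; rw [← Finset.mul_sum]; ring

noncomputable def Gr (D : Finset W) (z x : W) : ℝ := (tau g D)⁻¹ * hit g (D.erase z) {z} x

theorem Gr_nonneg (D : Finset W) (z x : W) : 0 ≤ Gr g D z x :=
  mul_nonneg (inv_nonneg.2 (tau_pos g D).le) (hit_nonneg g _ _ _)

theorem Gr_lap {D : Finset W} {z : W} (hz : z ∈ D) {x : W} (hx : x ∈ D) :
    lap g (Gr g D z) x = if x = z then 1 else 0 := by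
  have : Gr g D z = fun x => (tau g D)⁻¹ * hit g (D.erase z) {z} x := rfl
  rw [this, lap_smul]
  split_ifs with h
  · subst h
    rw [lap_root g hz, inv_mul_cancel₀ (tau_pos g D).ne']
  · rw [harm g (by intro y hy; simpa using Finset.ne_of_mem_erase hy)
      (Finset.mem_erase.2 ⟨h, hx⟩), mul_zero]

theorem Gr_off {D : Finset W} {z : W} (hz : z ∈ D) {x : W} (hx : x ∉ D) : Gr g D z x = 0 := by
  unfold Gr
  rw [hit_root g _ _ (fun h => hx (Finset.mem_of_mem_erase h))]
  have : x ≠ z := fun h => hx (h ▸ hz)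
  simp [this]

theorem Gr_diag (D : Finset W) (z : W) : Gr g D z z = tau g (D.erase z) / tau g D := by
  unfold Gr
  rw [hit_root g _ _ (Finset.notMem_erase z D)]
  simp [div_eq_inv_mul]

theorem Gr_mono {D D' : Finset W} (h : D ⊆ D') {z : W} (hz : z ∈ D) (x : W) :
    Gr g D z x ≤ Gr g D' z x := by
  have := max_princ g D (fun y => Gr g D' z y - Gr g D z y) (fun y hy => by
    rw [Gr_off g hz hy, sub_zero]; exact Gr_nonneg g _ _ _) (fun y hy => by
    rw [lap_sub, Gr_lap g hz hy, Gr_lap g (h hz) (h hy), sub_self]) x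
  linarith

theorem Gr_le {D : Finset W} {z : W} (hz : z ∈ D) (H : W → ℝ) (hH : ∀ x, 0 ≤ H x)
    (hl : ∀ x, (if x = z then 1 else 0) ≤ lap g H x) (x : W) : Gr g D z x ≤ H x := by
  have := max_princ g D (fun y => H y - Gr g D z y) (fun y hy => by
    rw [Gr_off g hz hy, sub_zero]; exact hH y) (fun y hy => by
    rw [lap_sub, Gr_lap g hz hy]; linarith [hl y]) x
  linarith

theorem Mon (K : Finset W) : ∀ {D D' : Finset W}, D ⊆ D' → K ⊆ D →
    tau g (D \ K) * tau g D' ≤ tau g (D' \ K) * tau g D := by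
  induction K using Finset.induction_on with
  | empty => intro D D' _ _; simp [mul_comm]
  | insert v K hv ih =>
    intro D D' hD hK
    have hvD : v ∈ D := hK (Finset.mem_insert_self _ _)
    have e : ∀ E : Finset W, E \ insert v K = E.erase v \ K := by
      intro E; ext x; simp; tauto
    have h1 := ih (D := D.erase v) (D' := D'.erase v) (Finset.erase_subset_erase v hD)
      (fun x hx => Finset.mem_erase.2 ⟨fun h => hv (h ▸ hx), hK (Finset.mem_insert_of_mem hx)⟩)
    have h2 := Gr_mono g hD hvD v
    rw [Gr_diag, Gr_diag, div_le_div_iff₀ (tau_pos g _) (tau_pos g _)] at h2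
    rw [e, e]
    have p1 := tau_pos g (D.erase v)
    have p2 := tau_pos g (D'.erase v)
    have p3 := tau_pos g D
    have p4 := tau_pos g D'
    have p5 := tau_pos g (D.erase v \ K)
    have p6 := tau_pos g (D'.erase v \ K)
    have := mul_le_mul h1 h2 (by positivity) (by positivity)
    have p : 0 < tau g (D.erase v) * tau g (D'.erase v) := by positivity
    refine le_of_mul_le_mul_right ?_ p
    linarith

noncomputable def EK (D K : Finset W) (u : W) : ℝ :=
  ∑ w ∈ g.nb u, (tau g (D \ K) - hit g (D \ K) K w)

theorem EK_nonneg (D K : Finset W) (u : W) : 0 ≤ EK g D K u :=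
  Finset.sum_nonneg fun w _ => sub_nonneg.2 (hit_le g _ _ _)

theorem EK_eq {D K : Finset W} {u : W} (hu : u ∈ K) :
    EK g D K u = lap g (hit g (D \ K) K) u := by
  unfold EK lap
  rw [Finset.sum_sub_distrib, Finset.sum_const, g.hdeg, nsmul_eq_mul,
    hit_root g _ _ (by simp [hu])]
  simp [hu]

theorem green (D : Finset W) (f h : W → ℝ) (hf : ∀ x, x ∉ D → f x = 0)
    (hh : ∀ x, x ∉ D → h x = 0) :
    ∑ x ∈ D, f x * lap g h x = ∑ x ∈ D, lap g f x * h x := by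
  have e1 : ∀ (k : W → ℝ), (∀ x, x ∉ D → k x = 0) → ∀ x,
      ∑ w ∈ g.nb x, k w = ∑ w ∈ D, if w ∈ g.nb x then k w else 0 := by
    intro k hk x
    rw [← Finset.sum_filter, Finset.filter_mem_eq_inter]
    symm
    refine Finset.sum_subset Finset.inter_subset_right ?_
    intro w hw hw2
    exact hk w (fun h => hw2 (Finset.mem_inter.2 ⟨h, hw⟩))
  unfold lap
  simp_rw [e1 h hh, e1 f hf, mul_sub, sub_mul, Finset.mul_sum, Finset.sum_mul,
    Finset.sum_sub_distrib]
  congr 1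
  · exact Finset.sum_congr rfl fun x _ => by ring
  · rw [Finset.sum_comm]
    refine Finset.sum_congr rfl fun x _ => Finset.sum_congr rfl fun y _ => ?_
    by_cases hxy : x ∈ g.nb y
    · simp [hxy, g.symm x y hxy]
    · have : y ∉ g.nb x := fun hc => hxy (g.symm _ _ hc)
      simp [hxy, this]

theorem F5 {D K : Finset W} {z : W} (hK : K ⊆ D) (hz : z ∈ K) :
    ∑ u ∈ K, Gr g D z u * EK g D K u = tau g (D \ K) := by
  have h1 := green g D (Gr g D z) (hit g (D \ K) K) (fun x hx => Gr_off g (hK hz) hx)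
    (fun x hx => by
      rw [hit_root g _ _ (fun h => hx (Finset.mem_sdiff.1 h).1)]
      simp [show x ∉ K from fun h => hx (hK h)])
  have h2 : ∑ x ∈ D, lap g (Gr g D z) x * hit g (D \ K) K x
      = ∑ x ∈ D, (if x = z then 1 else 0) * hit g (D \ K) K x :=
    Finset.sum_congr rfl (fun x hx => by rw [Gr_lap g (hK hz) hx])
  rw [h2] at h1
  simp only [ite_mul, one_mul, zero_mul, Finset.sum_ite_eq', hK hz, if_true] at h1
  rw [hit_root g _ _ (by simp [hz])] at h1
  simp only [Finset.mem_coe, hz, if_true] at h1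
  rw [← h1]
  rw [← Finset.sum_subset hK]
  · exact Finset.sum_congr rfl fun u hu => by rw [EK_eq g hu]
  · intro x hx hxK
    rw [harm g (by intro y hy; simpa using (Finset.mem_sdiff.1 hy).2)
      (Finset.mem_sdiff.2 ⟨hx, hxK⟩), mul_zero]

theorem EK_mono {D K K2 : Finset W} {u : W} (h2 : K2 ⊆ K) (hK : K ⊆ D) (hu : u ∈ K2) :
    EK g D K u * tau g (D \ K2) ≤ EK g D K2 u * tau g (D \ K) := by
  unfold EK
  rw [Finset.sum_mul, Finset.sum_mul]
  refine Finset.sum_le_sum fun w _ => ?_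
  have := max_princ g (D \ K) (fun y => tau g (D \ K2) * hit g (D \ K) K y
      - tau g (D \ K) * hit g (D \ K2) K2 y) ?_ ?_ w
  · nlinarith
  · intro x hx
    rw [hit_root g _ _ hx]
    by_cases hxK : x ∈ K
    · simp only [Finset.mem_coe, hxK, if_true]
      have := hit_le g (D \ K2) K2 x
      have := tau_pos g (D \ K)
      nlinarith
    · have hxD : x ∉ D := fun h => hx (Finset.mem_sdiff.2 ⟨h, hxK⟩)
      rw [hit_root g _ _ (fun h => hxD (Finset.mem_sdiff.1 h).1)]
      have : x ∉ K2 := fun h => hxK (h2 h)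
      simp [hxK, this]
  · intro x hx
    rw [lap_sub, lap_smul, lap_smul,
      harm g (by intro y hy; simpa using (Finset.mem_sdiff.1 hy).2) hx,
      harm g (by intro y hy; simpa using (Finset.mem_sdiff.1 hy).2)
        (Finset.sdiff_subset_sdiff (le_refl D) h2 hx)]
    simp

end abs2

section abs3
variable {W : Type} [DecidableEq W] (g : Gph W)

noncomputable def PS : ℕ → Finset W → W → (List W → ℝ) → ℝ
  | 0, _, _, φ => φ []
  | m + 1, D, y, φ => ∑ v ∈ (g.nb y).filter (fun v => v ∈ D),
      PS m (D.erase v) v (fun l => φ (v :: l))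

theorem PS_nonneg (m : ℕ) : ∀ (D : Finset W) (y : W) (φ : List W → ℝ), (∀ l, 0 ≤ φ l) →
    0 ≤ PS g m D y φ := by
  induction m with
  | zero => intro D y φ h; exact h []
  | succ m ih => intro D y φ h; exact Finset.sum_nonneg fun v _ => ih _ _ _ fun l => h _

theorem PS_mono (m : ℕ) : ∀ (D D' : Finset W) (y : W) (φ φ' : List W → ℝ), D ⊆ D' →
    (∀ l : List W, l.length = m → (∀ x ∈ l, x ∈ D) → φ l ≤ φ' l) → (∀ l, 0 ≤ φ' l) →
    PS g m D y φ ≤ PS g m D' y φ' := by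
  induction m with
  | zero => intro D D' y φ φ' _ h _; exact h [] rfl (by simp)
  | succ m ih =>
    intro D D' y φ φ' hD h h0
    unfold PS
    calc _ ≤ ∑ v ∈ (g.nb y).filter (fun v => v ∈ D),
          PS g m (D'.erase v) v (fun l => φ' (v :: l)) := by
          refine Finset.sum_le_sum fun v hv => ih _ _ _ _ _ (Finset.erase_subset_erase v hD) ?_ ?_
          · intro l hl hlD
            refine h _ (by simp [hl]) ?_
            intro x hx
            rcases List.mem_cons.1 hx with rfl | hx
            · exact (Finset.mem_filter.1 hv).2
            · exact Finset.mem_of_mem_erase (hlD x hx)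
          · intro l; exact h0 _
      _ ≤ _ := by
          refine Finset.sum_le_sum_of_subset_of_nonneg ?_ ?_
          · intro v hv
            rw [Finset.mem_filter] at hv ⊢
            exact ⟨hv.1, hD hv.2⟩
          · intro v _ _
            exact PS_nonneg g _ _ _ _ fun l => h0 _

theorem PS_congr (m : ℕ) : ∀ (D : Finset W) (y : W) (φ φ' : List W → ℝ),
    (∀ l : List W, l.length = m → (∀ x ∈ l, x ∈ D) → φ l = φ' l) →
    PS g m D y φ = PS g m D y φ' := by
  induction m with
  | zero => intro D y φ φ' h; exact h [] rfl (by simp)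
  | succ m ih =>
    intro D y φ φ' h
    unfold PS
    refine Finset.sum_congr rfl fun v hv => ih _ _ _ _ ?_
    intro l hl hlD
    refine h _ (by simp [hl]) ?_
    intro x hx
    rcases List.mem_cons.1 hx with rfl | hx
    · exact (Finset.mem_filter.1 hv).2
    · exact Finset.mem_of_mem_erase (hlD x hx)

theorem PS_sum {ι : Type} (s : Finset ι) (m : ℕ) : ∀ (D : Finset W) (y : W) (φ : ι → List W → ℝ),
    PS g m D y (fun l => ∑ i ∈ s, φ i l) = ∑ i ∈ s, PS g m D y (φ i) := by
  induction m with
  | zero => intro D y φ; rfl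
  | succ m ih =>
    intro D y φ
    unfold PS
    rw [Finset.sum_comm]
    exact Finset.sum_congr rfl fun v _ => ih _ _ _

theorem PS_mul (c : ℝ) (m : ℕ) : ∀ (D : Finset W) (y : W) (φ : List W → ℝ),
    PS g m D y (fun l => c * φ l) = c * PS g m D y φ := by
  induction m with
  | zero => intro D y φ; rfl
  | succ m ih =>
    intro D y φ
    unfold PS
    rw [Finset.mul_sum]
    exact Finset.sum_congr rfl fun v _ => ih _ _ _

theorem sdiff_cons (D : Finset W) (v : W) (l : List W) :
    D \ (v :: l).toFinset = D.erase v \ l.toFinset := by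
  ext x; simp; tauto

theorem PS_split (i j : ℕ) : ∀ (D : Finset W) (y : W) (φ : List W → ℝ),
    PS g (i + j) D y φ = PS g i D y (fun l1 =>
      PS g j (D \ l1.toFinset) (l1.getLastD y) (fun l2 => φ (l1 ++ l2))) := by
  induction i with
  | zero => intro D y φ; simp [PS]
  | succ i ih =>
    intro D y φ
    rw [show i + 1 + j = (i + j) + 1 by ring]
    unfold PS
    refine Finset.sum_congr rfl fun v hv => ?_
    rw [ih]
    refine PS_congr g _ _ _ _ _ fun l _ _ => ?_
    show _ = PS g j (D \ (v :: l).toFinset) ((v :: l).getLastD y) (fun l2 => φ ((v :: l) ++ l2))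
    rw [sdiff_cons, List.getLastD_cons]
    simp only [List.cons_append]

def pl (F : W → W) : ℕ → W → List W
  | 0, _ => []
  | m + 1, x => F^[m] x :: pl F m x

def cut (F : W → W) (l : List W) : W → W := fun w => if w ∈ l then w else F w

def dep (F : W → W) (D : Finset W) (m : ℕ) (x z : W) : Prop :=
  F^[m] x = z ∧ ∀ j < m, F^[j] x ∈ D

theorem mem_pl (F : W → W) (m : ℕ) (x w : W) : w ∈ pl F m x ↔ ∃ j < m, F^[j] x = w := by
  induction m with
  | zero => simp [pl]
  | succ m ih =>
    simp only [pl, List.mem_cons, ih]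
    constructor
    · rintro (h | ⟨j, hj, h⟩)
      · exact ⟨m, by omega, h.symm⟩
      · exact ⟨j, by omega, h⟩
    · rintro ⟨j, hj, h⟩
      by_cases hjm : j = m
      · left; rw [← h, hjm]
      · right; exact ⟨j, by omega, h⟩

theorem pl_last (F : W → W) (m : ℕ) (x z : W) (h : F^[m] x = z) : (pl F m x).getLastD z = x := by
  induction m generalizing z with
  | zero => simpa [pl] using h.symm
  | succ m ih =>
    simp only [pl, List.getLastD_cons]
    exact ih _ rfl

theorem pl_congr {F F' : W → W} (m : ℕ) (x : W) (h : ∀ j < m, F'^[j] x = F^[j] x) :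
    pl F' m x = pl F m x := by
  induction m with
  | zero => rfl
  | succ m ih =>
    simp only [pl]
    rw [h m (by omega), ih (fun j hj => h j (by omega))]

theorem transfer (X : Finset W) (m : ℕ) : ∀ (D : Finset W) (z : W) (φ : List W → (W → W) → ℝ),
    D ⊆ X → z ∈ X → z ∉ D →
    PS g m D z (fun l => ∑ F ∈ FF g (D \ l.toFinset), φ l F)
      = ∑ F ∈ FF g D, ∑ x ∈ X, if dep F D m x z then φ (pl F m x) (cut F (pl F m x)) else 0 := by
  induction m with
  | zero =>
    intro D z φ hD hz hzD
    simp only [PS, List.toFinset_nil, Finset.sdiff_empty]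
    refine Finset.sum_congr rfl fun F _ => ?_
    rw [Finset.sum_eq_single z]
    · have : cut F [] = F := by funext w; simp [cut]
      simp [dep, pl, this]
    · intro x _ hx; simp [dep, hx]
    · intro h; exact absurd hz h
  | succ m ih =>
    intro D z φ hD hz hzD
    unfold PS
    have step : ∀ w ∈ (g.nb z).filter (fun v => v ∈ D),
        PS g m (D.erase w) w (fun l => ∑ F ∈ FF g (D \ (w :: l).toFinset), φ (w :: l) F)
        = ∑ F ∈ FF g D, ∑ x ∈ X, if w = F^[m] x then (if dep F D (m + 1) x z then
            φ (pl F (m + 1) x) (cut F (pl F (m + 1) x)) else 0) else 0 := by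
      intro w hw
      obtain ⟨hwz, hwD⟩ := Finset.mem_filter.1 hw
      simp_rw [sdiff_cons]
      rw [ih (D.erase w) w (fun l => φ (w :: l)) ((Finset.erase_subset _ _).trans hD) (hD hwD)
        (Finset.notMem_erase w D)]
      have h1 : ∑ F ∈ FF g D, (∑ x ∈ X, if w = F^[m] x then (if dep F D (m + 1) x z then
            φ (pl F (m + 1) x) (cut F (pl F (m + 1) x)) else 0) else 0)
          = ∑ F ∈ FF g D, if F w = z then (∑ x ∈ X, if w = F^[m] x then
            (if dep F D (m + 1) x z then
            φ (pl F (m + 1) x) (cut F (pl F (m + 1) x)) else 0) else 0) else 0 := by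
        refine Finset.sum_congr rfl fun F _ => ?_
        split_ifs with h
        · rfl
        · refine Finset.sum_eq_zero fun x _ => ?_
          split_ifs with h2 h3
          · exfalso
            apply h
            rw [h2, ← Function.iterate_succ_apply' F m x, h3.1]
          · rfl
          · rfl
      rw [h1, glue1 g hwD hzD (g.symm _ _ hwz)]
      refine Finset.sum_congr rfl fun F hF => Finset.sum_congr rfl fun x _ => ?_
      rw [mem_FF] at hF
      have hFw : F w = w := hF.1 w (Finset.notMem_erase w D)
      have hne : ∀ v, v ∉ ({w} : Set W) → Function.update F w z v = F v :=
        fun w hw => Function.update_of_ne hw _ _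
      have hne' : ∀ v, v ∉ ({w} : Set W) → F v = Function.update F w z v :=
        fun w hw => (hne w hw).symm
      by_cases hd : dep F (D.erase w) m x w
      · have ha : ∀ k ≤ m, (Function.update F w z)^[k] x = F^[k] x := fun k hk =>
          agree_iter hne x k (fun j hj => Finset.ne_of_mem_erase (hd.2 j (by omega)))
        have e1 : (Function.update F w z)^[m] x = w := by rw [ha m le_rfl, hd.1]
        have hd' : dep (Function.update F w z) D (m + 1) x z := by
          refine ⟨?_, ?_⟩
          · rw [Function.iterate_succ_apply', e1, Function.update_self]
          · intro j hj
            by_cases hjm : j = m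
            · rw [hjm, e1]; exact hwD
            · rw [ha j (by omega)]; exact Finset.mem_of_mem_erase (hd.2 j (by omega))
        have e2 : pl (Function.update F w z) (m + 1) x = w :: pl F m x := by
          simp only [pl]
          rw [e1, pl_congr m x (fun j hj => ha j (by omega))]
        have e3 : cut (Function.update F w z) (w :: pl F m x) = cut F (pl F m x) := by
          funext v
          unfold cut
          by_cases hv : v = w
          · subst hv; simp [hFw]
          · simp [hv]
        rw [if_pos hd, if_pos e1.symm, if_pos hd', e2, e3]
      · rw [if_neg hd]
        split_ifs with h2 h3
        · exfalso
          apply hd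
          have hnw : ∀ j < m, (Function.update F w z)^[j] x ≠ w := by
            intro j hj hc
            have : (Function.update F w z)^[j + 1] x = z := by
              rw [Function.iterate_succ_apply', hc, Function.update_self]
            rcases Nat.lt_or_ge (j + 1) (m + 1) with h4 | h4
            · exact hzD (this ▸ h3.2 (j + 1) h4)
            · omega
          have ha : ∀ k ≤ m, F^[k] x = (Function.update F w z)^[k] x := fun k hk =>
            agree_iter hne' x k (fun j hj => hnw j (by omega))
          refine ⟨by rw [ha m le_rfl, ← h2], fun j hj => ?_⟩
          rw [ha j (by omega)]
          exact Finset.mem_erase.2 ⟨hnw j hj, h3.2 j (by omega)⟩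
        · rfl
        · rfl
    rw [Finset.sum_congr rfl step, Finset.sum_comm]
    refine Finset.sum_congr rfl fun F hF => ?_
    rw [mem_FF] at hF
    rw [Finset.sum_comm]
    refine Finset.sum_congr rfl fun x _ => ?_
    rw [Finset.sum_ite_eq']
    split_ifs with h1 h2 h2
    · rfl
    · rfl
    · exfalso
      apply h1
      have hm := h2.2 m (by omega)
      refine Finset.mem_filter.2 ⟨?_, hm⟩
      have := hF.2.1 _ hm
      rw [← Function.iterate_succ_apply' F m x, h2.1] at this
      exact g.symm _ _ this
    · rfl

end abs3

section abs4
variable {W : Type} [DecidableEq W] (g : Gph W)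

theorem Wbound {Λ : Finset W} {z : W} (hz : z ∈ Λ) (n : ℕ) (c : W → ℝ) (hc : ∀ x, 0 ≤ c x) :
    ∑ i ∈ Finset.range n, PS g i (Λ.erase z) z
        (fun l => c (l.getLastD z) * tau g (Λ.erase z \ l.toFinset))
      ≤ tau g Λ * ∑ x ∈ Λ, Gr g Λ z x * c x := by
  have h1 : ∀ i, PS g i (Λ.erase z) z
        (fun l => c (l.getLastD z) * tau g (Λ.erase z \ l.toFinset))
      = ∑ F ∈ FF g (Λ.erase z), ∑ x ∈ Λ, if dep F (Λ.erase z) i x z then c x else 0 := by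
    intro i
    have := transfer g Λ i (Λ.erase z) z (fun l _ => c (l.getLastD z)) (Finset.erase_subset _ _)
      hz (Finset.notMem_erase _ _)
    simp only [Finset.sum_const, nsmul_eq_mul] at this
    have h2 : (fun l : List W => c (l.getLastD z) * tau g (Λ.erase z \ l.toFinset))
        = (fun l : List W => ((FF g (Λ.erase z \ l.toFinset)).card : ℝ) * c (l.getLastD z)) := by
      funext l; rw [mul_comm]; rfl
    rw [h2, this]
    refine Finset.sum_congr rfl fun F _ => Finset.sum_congr rfl fun x _ => ?_
    split_ifs with h
    · rw [pl_last F i x z h.1]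
    · rfl
  rw [Finset.sum_congr rfl (fun i _ => h1 i), Finset.mul_sum]
  have h3 : ∀ x, tau g Λ * (Gr g Λ z x * c x)
      = ∑ F ∈ FF g (Λ.erase z), if reach F x {z} then c x else 0 := by
    intro x
    unfold Gr
    rw [← mul_assoc, ← mul_assoc, mul_inv_cancel₀ (tau_pos g Λ).ne', one_mul]
    unfold hit
    rw [Finset.sum_mul]
    refine Finset.sum_congr rfl fun F _ => ?_
    split_ifs <;> simp
  rw [Finset.sum_congr rfl (fun x _ => h3 x), Finset.sum_comm, Finset.sum_comm (s := Λ)]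
  refine Finset.sum_le_sum fun F _ => ?_
  rw [Finset.sum_comm]
  refine Finset.sum_le_sum fun x _ => ?_
  by_cases h : ∃ i, dep F (Λ.erase z) i x z
  · obtain ⟨i0, hi0⟩ := h
    have hr : reach F x {z} := ⟨i0, hi0.1⟩
    rw [if_pos hr]
    have huniq : ∀ i, i ≠ i0 → ¬ dep F (Λ.erase z) i x z := by
      intro i hi hd
      rcases lt_or_gt_of_ne hi with h4 | h4
      · exact Finset.notMem_erase z Λ (hd.1 ▸ hi0.2 i h4)
      · exact Finset.notMem_erase z Λ (hi0.1 ▸ hd.2 i0 h4)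
    calc _ ≤ ∑ i ∈ insert i0 (Finset.range n), if dep F (Λ.erase z) i x z then c x else 0 :=
          Finset.sum_le_sum_of_subset_of_nonneg (Finset.subset_insert _ _)
            (fun i _ _ => by split_ifs; exacts [hc x, le_rfl])
      _ = c x := by
          rw [Finset.sum_eq_single i0]
          · rw [if_pos hi0]
          · intro i _ hi; rw [if_neg (huniq i hi)]
          · intro h; exact absurd (Finset.mem_insert_self _ _) h
  · push Not at h
    rw [Finset.sum_eq_zero (fun i _ => if_neg (h i))]
    split_ifs; exacts [hc x, le_rfl]

noncomputable def fd (Λ : Finset W) (j : ℕ) (u : W) : ℝ :=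
  (tau g Λ)⁻¹ * ∑ T ∈ FF g Λ, ∑ x ∈ Λ, if T^[j] x = u then (1 : ℝ) else 0

theorem fd_nonneg (Λ : Finset W) (j : ℕ) (u : W) : 0 ≤ fd g Λ j u :=
  mul_nonneg (inv_nonneg.2 (tau_pos g Λ).le) (Finset.sum_nonneg fun _ _ =>
    Finset.sum_nonneg fun _ _ => by split_ifs <;> norm_num)

theorem fd_sum (Λ : Finset W) (j : ℕ) : ∑ u ∈ Λ, fd g Λ j u ≤ Λ.card := by
  unfold fd
  rw [← Finset.mul_sum, Finset.sum_comm, inv_mul_le_iff₀ (tau_pos g Λ)]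
  calc _ ≤ ∑ T ∈ FF g Λ, (Λ.card : ℝ) := by
        refine Finset.sum_le_sum fun T _ => ?_
        rw [Finset.sum_comm, Finset.card_eq_sum_ones]
        push_cast
        refine Finset.sum_le_sum fun x _ => ?_
        rw [Finset.sum_ite_eq]
        split_ifs <;> norm_num
    _ = _ := by simp [tau]

theorem fdb {Λ : Finset W} {u : W} (hu : u ∈ Λ) (j : ℕ) :
    PS g j (Λ.erase u) u (fun l => EK g Λ (insert u l.toFinset) u) ≤ tau g Λ * fd g Λ j u := by
  have hset : ∀ l : List W, Λ \ insert u l.toFinset = Λ.erase u \ l.toFinset := by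
    intro l; ext x; simp; tauto
  have h1 : (fun l : List W => EK g Λ (insert u l.toFinset) u)
      = fun l : List W => ∑ F ∈ FF g (Λ.erase u \ l.toFinset), ∑ w ∈ g.nb u,
        (1 - if reach F w ((insert u l.toFinset : Finset W) : Set W) then (1 : ℝ) else 0) := by
    funext l
    unfold EK hit tau
    rw [hset, Finset.sum_comm]
    refine Finset.sum_congr rfl fun w _ => ?_
    rw [Finset.sum_sub_distrib]
    simp
  rw [h1, transfer g Λ j (Λ.erase u) u (fun l F => ∑ w ∈ g.nb u,
        (1 - if reach F w ((insert u l.toFinset : Finset W) : Set W) then (1 : ℝ) else 0))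
      (Finset.erase_subset _ _) hu (Finset.notMem_erase _ _)]
  unfold fd
  rw [← mul_assoc, mul_inv_cancel₀ (tau_pos g Λ).ne', one_mul, glue2 g hu]
  refine Finset.sum_le_sum fun F hF => ?_
  have h2 : (∑ p ∈ g.nb u, if reach F p {u} then (0 : ℝ) else
        ∑ x ∈ Λ, if (Function.update F u p)^[j] x = u then (1 : ℝ) else 0)
      = ∑ x ∈ Λ, ∑ p ∈ g.nb u, if reach F p {u} then (0 : ℝ) else
        if (Function.update F u p)^[j] x = u then (1 : ℝ) else 0 := by
    rw [Finset.sum_comm]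
    refine Finset.sum_congr rfl fun p _ => ?_
    split_ifs <;> simp
  rw [h2]
  refine Finset.sum_le_sum fun x _ => ?_
  split_ifs with hd
  · refine Finset.sum_le_sum fun p _ => ?_
    by_cases hr : reach F p {u}
    · have : reach (cut F (pl F j x)) p ((insert u (pl F j x).toFinset : Finset W) : Set W) := by
        have hex : ∃ k, F^[k] p ∈ ((insert u (pl F j x).toFinset : Finset W) : Set W) := by
          obtain ⟨k, hk⟩ := hr
          exact ⟨k, by rw [Set.mem_singleton_iff.1 hk]; simp⟩
        refine ⟨Nat.find hex, ?_⟩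
        rw [agree_iter (F := F) (L := ((insert u (pl F j x).toFinset : Finset W) : Set W))
          ?_ p _ (fun i hi => Nat.find_min hex hi)]
        · exact Nat.find_spec hex
        · intro w hw
          have : w ∉ pl F j x := fun h => hw (by simp [h])
          simp [cut, this]
      rw [if_pos this, if_pos hr]
      norm_num
    · rw [if_neg hr]
      have : (Function.update F u p)^[j] x = u := by
        rw [agree_iter (F := F) (L := {u}) (fun w hw => Function.update_of_ne hw _ _) x j
          (fun i hi => Finset.ne_of_mem_erase (hd.2 i hi)), hd.1]
      rw [if_pos this]
      split_ifs <;> norm_num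
  · refine Finset.sum_nonneg fun p _ => ?_
    split_ifs <;> norm_num

theorem sub_image (l : List W) (z : W) :
    insert z l.toFinset ⊆ (Finset.range (l.length + 1)).image (fun i => (l.take i).getLastD z) := by
  induction l generalizing z with
  | nil => simp
  | cons v l ih =>
    intro x hx
    rw [Finset.mem_insert] at hx
    rcases hx with rfl | hx
    · exact Finset.mem_image.2 ⟨0, by simp, by simp⟩
    · rw [List.toFinset_cons] at hx
      obtain ⟨i, hi, h⟩ := Finset.mem_image.1 (ih v hx)
      refine Finset.mem_image.2 ⟨i + 1, ?_, ?_⟩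
      · simp at hi ⊢; omega
      · rw [List.take_succ_cons, List.getLastD_cons]; exact h

theorem last_mem (l : List W) (z : W) : l.getLastD z ∈ insert z l.toFinset := by
  induction l generalizing z with
  | nil => simp
  | cons v l ih =>
    rw [List.getLastD_cons, List.toFinset_cons]
    exact Finset.mem_insert_of_mem (ih v)

theorem tri_sum (n : ℕ) (t : ℕ → ℕ → ℝ) (ht : ∀ i j, 0 ≤ t i j) :
    ∑ m ∈ Finset.range n, ∑ i ∈ Finset.range (m + 1), t i (m - i)
      ≤ ∑ i ∈ Finset.range n, ∑ j ∈ Finset.range n, t i j := by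
  rw [Finset.sum_comm' (t' := Finset.range n) (s' := fun i => Finset.Ico i n)]
  · refine Finset.sum_le_sum fun i hi => ?_
    rw [Finset.sum_Ico_eq_sum_range]
    simp only [Nat.add_sub_cancel_left]
    refine Finset.sum_le_sum_of_subset_of_nonneg ?_ (fun j _ _ => ht i j)
    intro j hj
    simp at hj ⊢
    omega
  · intro m i
    simp
    omega

theorem mainTerm {Λ : Finset W} {z : W} (hz : z ∈ Λ) (i j : ℕ) :
    PS g (i + j) (Λ.erase z) z (fun l => Gr g Λ z ((l.take i).getLastD z)
        * EK g Λ (insert z l.toFinset) ((l.take i).getLastD z))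
      ≤ g.deg * PS g i (Λ.erase z) z (fun l => (Gr g Λ z (l.getLastD z) * fd g Λ j (l.getLastD z))
          * tau g (Λ.erase z \ l.toFinset)) := by
  rw [PS_split, ← PS_mul]
  refine PS_mono g i _ _ _ _ _ (le_refl _) ?_ ?_
  · intro l1 hl1 hl1D
    set u := l1.getLastD z with hu
    have hK1 : insert z l1.toFinset ⊆ Λ := by
      intro x hx
      rcases Finset.mem_insert.1 hx with rfl | hx
      · exact hz
      · exact Finset.mem_of_mem_erase (hl1D x (List.mem_toFinset.1 hx))
    have huK : u ∈ insert z l1.toFinset := last_mem l1 z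
    have huL : u ∈ Λ := hK1 huK
    have hτ := tau_pos g Λ
    set c : ℝ := Gr g Λ z u * (g.deg * tau g (Λ.erase z \ l1.toFinset) / tau g Λ) with hcdef
    have hc : 0 ≤ c := by
      have := Gr_nonneg g Λ z u
      have := tau_pos g (Λ.erase z \ l1.toFinset)
      positivity
    have hDu : Λ.erase z \ l1.toFinset ⊆ Λ.erase u := by
      intro x hx
      simp only [Finset.mem_sdiff, Finset.mem_erase] at hx ⊢
      refine ⟨fun h => ?_, hx.1.2⟩
      subst h
      rcases Finset.mem_insert.1 huK with h | h
      · exact hx.1.1 h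
      · exact hx.2 h
    calc PS g j (Λ.erase z \ l1.toFinset) u (fun l2 => Gr g Λ z (((l1 ++ l2).take i).getLastD z)
            * EK g Λ (insert z (l1 ++ l2).toFinset) (((l1 ++ l2).take i).getLastD z))
        ≤ PS g j (Λ.erase u) u (fun l2 => c * EK g Λ (insert u l2.toFinset) u) := by
          refine PS_mono g j _ _ _ _ _ hDu ?_ (fun l => mul_nonneg hc (EK_nonneg g _ _ _))
          intro l2 _ hl2
          rw [List.take_left' hl1, ← hu, hcdef, mul_assoc]
          refine mul_le_mul_of_nonneg_left ?_ (Gr_nonneg g _ _ _)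
          have hK2 : insert u l2.toFinset ⊆ insert z (l1 ++ l2).toFinset := by
            intro x hx
            rcases Finset.mem_insert.1 hx with rfl | hx
            · rcases Finset.mem_insert.1 huK with h | h
              · rw [h]; exact Finset.mem_insert_self _ _
              · refine Finset.mem_insert_of_mem ?_
                simp at h ⊢; exact Or.inl h
            · refine Finset.mem_insert_of_mem ?_
              simp at hx ⊢; exact Or.inr hx
          have hKL : insert z (l1 ++ l2).toFinset ⊆ Λ := by
            intro x hx
            rcases Finset.mem_insert.1 hx with rfl | hx
            · exact hz
            · rcases List.mem_append.1 (List.mem_toFinset.1 hx) with h | h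
              · exact Finset.mem_of_mem_erase (hl1D x h)
              · exact Finset.mem_of_mem_erase (Finset.mem_sdiff.1 (hl2 x h)).1
          have h1 := EK_mono g hK2 hKL (Finset.mem_insert_self u _)
          have h2 := Mon g l2.toFinset hDu (fun x hx => hl2 x (List.mem_toFinset.1 hx))
          have e1 : Λ \ insert z (l1 ++ l2).toFinset = (Λ.erase z \ l1.toFinset) \ l2.toFinset := by
            ext x; simp; tauto
          have e2 : Λ \ insert u l2.toFinset = Λ.erase u \ l2.toFinset := by
            ext x; simp; tauto
          rw [e1, e2] at h1
          have h3 := tau_le g Λ huL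
          have p1 := tau_pos g (Λ.erase u \ l2.toFinset)
          have p2 := tau_pos g ((Λ.erase z \ l1.toFinset) \ l2.toFinset)
          have p3 := tau_pos g (Λ.erase u)
          have p4 := tau_pos g (Λ.erase z \ l1.toFinset)
          have q := EK_nonneg g Λ (insert u l2.toFinset) u
          generalize EK g Λ (insert u l2.toFinset) u = E2 at *
          generalize EK g Λ (insert z (l1 ++ l2).toFinset) u = E1 at *
          generalize tau g (Λ.erase u \ l2.toFinset) = a at *
          generalize tau g ((Λ.erase z \ l1.toFinset) \ l2.toFinset) = b at *
          generalize tau g (Λ.erase u) = e at *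
          generalize tau g (Λ.erase z \ l1.toFinset) = f at *
          generalize tau g Λ = t at *
          rw [div_mul_eq_mul_div, le_div_iff₀ hτ]
          have s1 : E1 ≤ E2 * (b / a) := by
            rw [← mul_div_assoc, le_div_iff₀ p1]; exact h1
          have s2 : b / a ≤ f / e := by
            rw [div_le_div_iff₀ p1 p3]; linarith
          have s3 : E1 ≤ E2 * (f / e) := s1.trans (mul_le_mul_of_nonneg_left s2 q)
          calc E1 * t ≤ (E2 * (f / e)) * (g.deg * e) := by
                refine mul_le_mul s3 h3 hτ.le (by positivity)
            _ = _ := by field_simp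
      _ = c * PS g j (Λ.erase u) u (fun l2 => EK g Λ (insert u l2.toFinset) u) := PS_mul g _ _ _ _ _
      _ ≤ c * (tau g Λ * fd g Λ j u) := mul_le_mul_of_nonneg_left (fdb g huL j) hc
      _ = _ := by rw [hcdef]; field_simp
  · intro l
    have := Gr_nonneg g Λ z (l.getLastD z)
    have := fd_nonneg g Λ j (l.getLastD z)
    have := tau_pos g (Λ.erase z \ l.toFinset)
    positivity

theorem mainA {Λ : Finset W} {z : W} (hz : z ∈ Λ) (n : ℕ) :
    ∑ m ∈ Finset.range n, PS g m (Λ.erase z) z (fun l => tau g (Λ.erase z \ l.toFinset))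
      ≤ g.deg * (tau g Λ * ∑ x ∈ Λ, Gr g Λ z x * (Gr g Λ z x *
          ∑ j ∈ Finset.range n, fd g Λ j x)) := by
  have h1 : ∀ m, PS g m (Λ.erase z) z (fun l => tau g (Λ.erase z \ l.toFinset))
      ≤ ∑ i ∈ Finset.range (m + 1), g.deg * PS g i (Λ.erase z) z (fun l =>
        (Gr g Λ z (l.getLastD z) * fd g Λ (m - i) (l.getLastD z))
          * tau g (Λ.erase z \ l.toFinset)) := by
    intro m
    calc _ ≤ PS g m (Λ.erase z) z (fun l => ∑ i ∈ Finset.range (m + 1),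
            Gr g Λ z ((l.take i).getLastD z)
            * EK g Λ (insert z l.toFinset) ((l.take i).getLastD z)) := by
          refine PS_mono g m _ _ _ _ _ (le_refl _) ?_ ?_
          · intro l hl hlD
            have hK : insert z l.toFinset ⊆ Λ := by
              intro x hx
              rcases Finset.mem_insert.1 hx with rfl | hx
              · exact hz
              · exact Finset.mem_of_mem_erase (hlD x (List.mem_toFinset.1 hx))
            have e1 : Λ.erase z \ l.toFinset = Λ \ insert z l.toFinset := by
              ext x; simp; tauto
            rw [e1, ← F5 g hK (Finset.mem_insert_self z _)]
            have hs := sub_image l z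
            rw [hl] at hs
            have hnn : ∀ u, 0 ≤ Gr g Λ z u * EK g Λ (insert z l.toFinset) u := fun u =>
              mul_nonneg (Gr_nonneg g _ _ _) (EK_nonneg g _ _ _)
            refine (Finset.sum_le_sum_of_subset_of_nonneg hs (fun u _ _ => hnn u)).trans ?_
            exact Finset.sum_image_le_of_nonneg (fun u _ => hnn u)
          · intro l
            exact Finset.sum_nonneg fun i _ =>
              mul_nonneg (Gr_nonneg g _ _ _) (EK_nonneg g _ _ _)
      _ = ∑ i ∈ Finset.range (m + 1), PS g m (Λ.erase z) z (fun l =>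
            Gr g Λ z ((l.take i).getLastD z)
            * EK g Λ (insert z l.toFinset) ((l.take i).getLastD z)) := PS_sum g _ _ _ _ _
      _ ≤ _ := by
          refine Finset.sum_le_sum fun i hi => ?_
          have : i + (m - i) = m := by simp at hi; omega
          have h := mainTerm g hz i (m - i)
          rwa [this] at h
  have hnn : ∀ i j, 0 ≤ g.deg * PS g i (Λ.erase z) z (fun l =>
        (Gr g Λ z (l.getLastD z) * fd g Λ j (l.getLastD z))
          * tau g (Λ.erase z \ l.toFinset)) := by
    intro i j
    refine mul_nonneg (Nat.cast_nonneg _) (PS_nonneg g _ _ _ _ fun l => ?_)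
    have := Gr_nonneg g Λ z (l.getLastD z)
    have := fd_nonneg g Λ j (l.getLastD z)
    have := tau_pos g (Λ.erase z \ l.toFinset)
    positivity
  refine (Finset.sum_le_sum fun m _ => h1 m).trans ?_
  refine (tri_sum n _ hnn).trans ?_
  simp_rw [← Finset.mul_sum]
  refine mul_le_mul_of_nonneg_left ?_ (Nat.cast_nonneg _)
  have h2 := Wbound g hz n (fun x => Gr g Λ z x * ∑ j ∈ Finset.range n, fd g Λ j x)
    (fun x => mul_nonneg (Gr_nonneg g _ _ _) (Finset.sum_nonneg fun j _ => fd_nonneg g _ _ _))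
  refine le_trans (le_of_eq ?_) h2
  refine Finset.sum_congr rfl fun i _ => ?_
  rw [← PS_sum]
  congr 1
  funext l
  rw [← Finset.sum_mul, ← Finset.mul_sum]

end abs4

section abs5
variable {W : Type} [DecidableEq W] (g : Gph W)

noncomputable def YS (n : ℕ) (D Z : Finset W) (F : W → W) : Finset W :=
  (D ∪ Z).filter (fun y => ∃ b ≤ n, F^[b] y ∈ Z)

noncomputable def PP (n : ℕ) (b : ℝ) : ℕ → ℝ → ℝ
  | 0, _ => 1
  | k + 1, s => s * b * PP n b k (s + n)

theorem PP_nonneg (n : ℕ) {b : ℝ} (hb : 0 ≤ b) (k : ℕ) : ∀ s : ℝ, 0 ≤ s → 0 ≤ PP n b k s := by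
  induction k with
  | zero => intro s _; simp [PP]
  | succ k ih =>
    intro s hs
    have := ih (s + n) (by positivity)
    unfold PP
    positivity

theorem PP_mono (n : ℕ) {b : ℝ} (hb : 0 ≤ b) (k : ℕ) : ∀ s s' : ℝ, 0 ≤ s → s ≤ s' →
    PP n b k s ≤ PP n b k s' := by
  induction k with
  | zero => intro s s' _ _; simp [PP]
  | succ k ih =>
    intro s s' hs hss
    have h1 := ih (s + n) (s' + n) (by positivity) (by linarith)
    have h2 := PP_nonneg n hb k (s + n) (by positivity)
    have h3 : 0 ≤ s' := hs.trans hss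
    unfold PP
    exact mul_le_mul (mul_le_mul_of_nonneg_right hss hb) h1 h2 (by positivity)

theorem PP_fac (n : ℕ) {b : ℝ} (hb : 0 ≤ b) (k : ℕ) : ∀ j : ℕ,
    (j.factorial : ℝ) * PP n b k ((j + 1) * (n + 1)) ≤ (j + k).factorial * (b * (n + 1)) ^ k := by
  induction k with
  | zero => intro j; simp [PP]
  | succ k ih =>
    intro j
    have h1 := ih (j + 1)
    have h2 := PP_mono n hb k ((j + 1) * (n + 1) + n) ((((j + 1 : ℕ) : ℝ) + 1) * (n + 1))
      (by positivity) (by push_cast; nlinarith)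
    unfold PP
    rw [show j + (k + 1) = j + 1 + k by ring, pow_succ]
    calc _ = ((j + 1 : ℝ) * j.factorial * PP n b k ((j + 1) * (n + 1) + n)) * (b * (n + 1)) := by ring
      _ ≤ (((j + 1).factorial : ℝ) * PP n b k ((((j + 1 : ℕ) : ℝ) + 1) * (n + 1))) * (b * (n + 1)) := by
          refine mul_le_mul_of_nonneg_right ?_ (by positivity)
          rw [Nat.factorial_succ]
          push_cast at h2 ⊢
          exact mul_le_mul_of_nonneg_left h2 (by positivity)
      _ ≤ _ := by
          refine (mul_le_mul_of_nonneg_right h1 (by positivity)).trans (le_of_eq ?_)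
          ring

theorem YS_cut (n : ℕ) (D Z : Finset W) (F : W → W) (l : List W) :
    YS n D Z F ⊆ YS n (D \ l.toFinset) (Z ∪ l.toFinset) (cut F l) := by
  intro y hy
  obtain ⟨hy1, b, hb, hy2⟩ := Finset.mem_filter.1 hy
  refine Finset.mem_filter.2 ⟨?_, ?_⟩
  · simp only [Finset.mem_union, Finset.mem_sdiff] at hy1 ⊢
    tauto
  · have hex : ∃ b, F^[b] y ∈ Z ∪ l.toFinset := ⟨b, Finset.mem_union_left _ hy2⟩
    refine ⟨Nat.find hex, (Nat.find_min' hex (Finset.mem_union_left _ hy2)).trans hb, ?_⟩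
    rw [agree_iter (F := F) (L := {w | w ∈ l}) ?_ y _ ?_]
    · exact Nat.find_spec hex
    · intro w hw
      have : w ∉ l := hw
      simp [cut, this]
    · intro j hj hc
      exact Nat.find_min hex hj (Finset.mem_union_right _ (List.mem_toFinset.2 hc))

theorem YS_dep {n : ℕ} {D Z : Finset W} {F : W → W} (hF : isF g D F) {y : W}
    (hy : y ∈ YS n D Z F) : ∃ z ∈ Z, ∃ m ∈ Finset.range (n + 1), dep F D m y z := by
  obtain ⟨hy1, b, hb, hy2⟩ := Finset.mem_filter.1 hy
  have hex : ∃ b, F^[b] y ∈ Z := ⟨b, hy2⟩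
  refine ⟨F^[Nat.find hex] y, Nat.find_spec hex, Nat.find hex, ?_, rfl, ?_⟩
  · exact Finset.mem_range.2 (Nat.lt_succ_of_le ((Nat.find_min' hex hy2).trans hb))
  · intro j hj
    by_contra hc
    apply Nat.find_min hex hj
    have h1 := iter_fix g hF hc (Nat.find hex - j)
    rw [← Function.iterate_add_apply, Nat.sub_add_cancel hj.le] at h1
    rw [← h1]; exact Nat.find_spec hex

theorem mom (n : ℕ) {b : ℝ} (hb : 0 ≤ b)
    (hK : ∀ (D : Finset W) (z : W), z ∉ D →
      ∑ m ∈ Finset.range (n + 1), PS g m D z (fun l => tau g (D \ l.toFinset)) ≤ b * tau g D)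
    (k : ℕ) : ∀ D Z : Finset W, (∀ z ∈ Z, z ∉ D) →
      ∑ F ∈ FF g D, ((YS n D Z F).card : ℝ) ^ k ≤ PP n b k Z.card * tau g D := by
  induction k with
  | zero => intro D Z _; simp [PP, tau]
  | succ k ih =>
    intro D Z hZ
    set φ : List W → (W → W) → ℝ := fun l F =>
      ((YS n (D \ l.toFinset) (Z ∪ l.toFinset) F).card : ℝ) ^ k with hφ
    have hφ0 : ∀ l F, 0 ≤ φ l F := fun l F => by positivity
    have h1 : ∀ F ∈ FF g D, ((YS n D Z F).card : ℝ) ^ (k + 1) ≤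
        ∑ z ∈ Z, ∑ m ∈ Finset.range (n + 1), ∑ x ∈ D ∪ Z,
          if dep F D m x z then φ (pl F m x) (cut F (pl F m x)) else 0 := by
      intro F hF
      rw [mem_FF] at hF
      rw [pow_succ', ← nsmul_eq_mul, ← Finset.sum_const]
      have h2 : ∀ y ∈ YS n D Z F, ((YS n D Z F).card : ℝ) ^ k ≤
          ∑ z ∈ Z, ∑ m ∈ Finset.range (n + 1),
          if dep F D m y z then φ (pl F m y) (cut F (pl F m y)) else 0 := by
        intro y hy
        obtain ⟨z, hz, m, hm, hd⟩ := YS_dep g hF hy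
        have e0 : ∀ z m, (0 : ℝ) ≤
            if dep F D m y z then φ (pl F m y) (cut F (pl F m y)) else 0 := by
          intro z m; split_ifs; exacts [hφ0 _ _, le_rfl]
        refine le_trans ?_ (Finset.single_le_sum (f := fun z => ∑ m ∈ Finset.range (n + 1),
          if dep F D m y z then φ (pl F m y) (cut F (pl F m y)) else 0)
          (fun z _ => Finset.sum_nonneg fun m _ => e0 z m) hz)
        refine le_trans ?_ (Finset.single_le_sum (f := fun m =>
          if dep F D m y z then φ (pl F m y) (cut F (pl F m y)) else 0)
          (fun m _ => e0 z m) hm)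
        simp only [if_pos hd]
        rw [hφ]
        exact pow_le_pow_left₀ (by positivity)
          (Nat.cast_le.2 (Finset.card_le_card (YS_cut n D Z F _))) k
      refine (Finset.sum_le_sum h2).trans ?_
      refine (Finset.sum_le_sum_of_subset_of_nonneg (Finset.filter_subset _ _) ?_).trans ?_
      · intro y _ _
        refine Finset.sum_nonneg fun z _ => Finset.sum_nonneg fun m _ => ?_
        split_ifs; exacts [hφ0 _ _, le_rfl]
      · rw [Finset.sum_comm]
        refine le_of_eq (Finset.sum_congr rfl fun z _ => ?_)
        rw [Finset.sum_comm]
    refine (Finset.sum_le_sum h1).trans ?_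
    rw [Finset.sum_comm]
    have hP := PP_nonneg n hb k (Z.card + n) (by positivity)
    have h3 : ∀ z ∈ Z, (∑ F ∈ FF g D, ∑ m ∈ Finset.range (n + 1), ∑ x ∈ D ∪ Z,
          if dep F D m x z then φ (pl F m x) (cut F (pl F m x)) else 0)
        ≤ PP n b k (Z.card + n) * (b * tau g D) := by
      intro z hz
      rw [Finset.sum_comm]
      refine le_trans ?_ (mul_le_mul_of_nonneg_left (hK D z (hZ z hz)) hP)
      rw [Finset.mul_sum]
      refine Finset.sum_le_sum fun m hm => ?_
      rw [← transfer g (D ∪ Z) m D z φ Finset.subset_union_left (Finset.mem_union_right _ hz)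
        (hZ z hz), ← PS_mul]
      refine PS_mono g m _ _ _ _ _ (le_refl _) ?_ ?_
      · intro l hl hlD
        refine (ih (D \ l.toFinset) (Z ∪ l.toFinset) ?_).trans ?_
        · intro w hw
          simp only [Finset.mem_union, Finset.mem_sdiff] at hw ⊢
          rintro ⟨h1, h2⟩
          rcases hw with h | h
          · exact hZ w h h1
          · exact h2 h
        · refine mul_le_mul_of_nonneg_right (PP_mono n hb k _ _ (by positivity) ?_) (tau_pos g _).le
          have h4 := Finset.card_union_le Z l.toFinset
          have h5 := l.toFinset_card_le
          have h6 : m ≤ n := by simp at hm; omega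
          have : (Z ∪ l.toFinset).card ≤ Z.card + n := by omega
          exact_mod_cast this
      · intro l
        exact mul_nonneg hP (tau_pos g _).le
    refine (Finset.sum_le_sum h3).trans (le_of_eq ?_)
    rw [Finset.sum_const, nsmul_eq_mul]
    simp only [PP]
    ring

theorem pl_rev (F : W → W) (m : ℕ) (x : W) :
    (pl F m x).reverse = (List.range m).map (fun j => F^[j] x) := by
  induction m with
  | zero => rfl
  | succ m ih => simp [pl, ih, List.range_succ]

noncomputable def Zl (n : ℕ) (z : W) (l : List W) : Finset W :=
  ((z :: l).reverse.take (n + 1)).toFinset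

theorem Zl_card (n : ℕ) (z : W) (l : List W) : (Zl n z l).card ≤ n + 1 :=
  (List.toFinset_card_le _).trans (by simp)

theorem Zl_sub (n : ℕ) (z : W) (l : List W) {w : W} (hw : w ∈ Zl n z l) : w = z ∨ w ∈ l := by
  have := List.mem_of_mem_take (List.mem_toFinset.1 hw)
  simpa [or_comm] using this

theorem Zl_mem (n m : ℕ) (F : W → W) (x : W) (w : W) :
    w ∈ Zl n (F^[m] x) (pl F m x) ↔ ∃ j ≤ n, j ≤ m ∧ F^[j] x = w := by
  have : (F^[m] x :: pl F m x) = pl F (m + 1) x := rfl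
  unfold Zl
  rw [this, pl_rev, ← List.map_take, List.take_range]
  simp only [List.mem_toFinset, List.mem_map, List.mem_range]
  constructor
  · rintro ⟨j, hj, h⟩; exact ⟨j, by omega, by omega, h⟩
  · rintro ⟨j, h1, h2, h⟩; exact ⟨j, by omega, h⟩

def BT (n : ℕ) (o : W) (T : W → W) : Set W := {y | ∃ a ≤ n, ∃ b ≤ n, T^[a] o = T^[b] y}

theorem BT_sub {A : Finset W} {T : W → W} (hT : isF g A T) {n m : ℕ} {o z : W}
    (hd : dep T A m o z) (hz : z ∉ A) :
    BT n o T ⊆ (YS n (A \ (pl T m o).toFinset) (Zl n z (pl T m o)) (cut T (pl T m o)) : Set W) := by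
  rintro y ⟨a, ha, b, hb, hab⟩
  have hzm := hd.1
  have hS : ∀ w, w ∈ Zl n z (pl T m o) ↔ ∃ j ≤ n, j ≤ m ∧ T^[j] o = w := by
    intro w; rw [← hzm]; exact Zl_mem n m T o w
  have hbS : T^[b] y ∈ Zl n z (pl T m o) := by
    rw [hS]
    by_cases h : a ≤ m
    · exact ⟨a, ha, h, hab⟩
    · refine ⟨m, by omega, le_rfl, ?_⟩
      rw [← hab, hzm, show a = (a - m) + m by omega, Function.iterate_add_apply, hzm,
        iter_fix g hT hz]
  have hex : ∃ b, T^[b] y ∈ Zl n z (pl T m o) := ⟨b, hbS⟩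
  set b' := Nat.find hex with hb'
  have hspec : T^[b'] y ∈ Zl n z (pl T m o) := Nat.find_spec hex
  have hb'n : b' ≤ n := (Nat.find_min' hex hbS).trans hb
  have hnl : ∀ j < b', T^[j] y ∉ pl T m o := by
    intro j hj hc
    obtain ⟨i, him, hi⟩ := (mem_pl T m o _).1 hc
    have hin : n < i := by
      by_contra h
      exact Nat.find_min hex hj ((hS _).2 ⟨i, by omega, by omega, hi⟩)
    obtain ⟨a', ha'n, ha'm, ha'⟩ := (hS _).1 hspec
    have e1 : T^[(b' - j) + i] o = T^[b'] y := by
      rw [Function.iterate_add_apply, hi, ← Function.iterate_add_apply, Nat.sub_add_cancel hj.le]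
    have e2 : T^[((b' - j) + i - a' - 1) + 1] (T^[a'] o) = T^[a'] o := by
      rw [← Function.iterate_add_apply,
        show (b' - j) + i - a' - 1 + 1 + a' = (b' - j) + i by omega, e1, ha']
    exact no_cycle g hT e2 (hd.2 a' (by omega))
  rw [Finset.mem_coe]
  refine Finset.mem_filter.2 ⟨?_, b', hb'n, ?_⟩
  · by_cases h0 : b' = 0
    · rw [h0] at hspec
      exact Finset.mem_union_right _ hspec
    · refine Finset.mem_union_left _ (Finset.mem_sdiff.2 ⟨?_, ?_⟩)
      · by_contra hyA
        rw [iter_fix g hT hyA] at hspec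
        exact Nat.find_min hex (Nat.pos_of_ne_zero h0) hspec
      · rw [List.mem_toFinset]
        exact hnl 0 (Nat.pos_of_ne_zero h0)
  · rw [agree_iter (F := T) (L := {w | w ∈ pl T m o}) ?_ y _ hnl]
    · exact hspec
    · intro w hw
      have : w ∉ pl T m o := hw
      simp [cut, this]

theorem dep_ex {A : Finset W} {T : W → W} (hT : isF g A T) (o : W) :
    ∃ m, T^[m] o ∉ A ∧ dep T A m o (T^[m] o) := by
  have hex := hT.2.2 o
  exact ⟨Nat.find hex, Nat.find_spec hex, rfl, fun j hj => by
    by_contra h; exact Nat.find_min hex hj h⟩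

theorem dep_bd {A : Finset W} {T : W → W} (hT : isF g A T) {m : ℕ} {o z : W}
    (hd : dep T A m o z) : m ≤ A.card := by
  have : (Finset.range m).card ≤ A.card := by
    refine Finset.card_le_card_of_injOn (fun j => T^[j] o) ?_ ?_
    · intro j hj
      exact hd.2 j (by simpa using hj)
    · have key : ∀ i j, i < j → j < m → T^[i] o ≠ T^[j] o := by
        intro i j hij hj h
        have e2 : T^[(j - i - 1) + 1] (T^[i] o) = T^[i] o := by
          rw [← Function.iterate_add_apply, show j - i - 1 + 1 + i = j by omega, h]
        exact no_cycle g hT e2 (hd.2 i (by omega))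
      intro i hi j hj h
      simp at hi hj
      rcases lt_trichotomy i j with h1 | h1 | h1
      · exact absurd h (key i j h1 hj)
      · exact h1
      · exact absurd h.symm (key j i h1 hi)
  simpa using this

theorem dep_root {A : Finset W} {T : W → W} (hT : isF g A T) {m : ℕ} {o z : W} (ho : o ∈ A)
    (hz : z ∉ A) (hd : dep T A m o z) : z ∈ A.biUnion g.nb := by
  cases m with
  | zero => exact absurd (hd.1 ▸ ho) hz
  | succ m =>
    rw [Finset.mem_biUnion]
    refine ⟨_, hd.2 m (by omega), ?_⟩
    rw [← hd.1, Function.iterate_succ_apply']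
    exact hT.2.1 _ (hd.2 m (by omega))

theorem mom0 (n : ℕ) {b : ℝ} (hb : 0 ≤ b)
    (hK : ∀ (D : Finset W) (z : W), z ∉ D →
      ∑ m ∈ Finset.range (n + 1), PS g m D z (fun l => tau g (D \ l.toFinset)) ≤ b * tau g D)
    (k : ℕ) (A : Finset W) (o : W) (ho : o ∈ A) :
      ∑ T ∈ FF g A, ((BT n o T).ncard : ℝ) ^ k ≤ k.factorial * (b * (n + 1)) ^ k * tau g A := by
  set R := (A.biUnion g.nb).filter (fun z => z ∉ A) with hR
  set M := A.card with hM
  set φ : W → List W → (W → W) → ℝ := fun z l F => if l.getLastD z = o then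
      ((YS n (A \ l.toFinset) (Zl n z l) F).card : ℝ) ^ k else 0 with hφ
  have hφ0 : ∀ z l F, 0 ≤ φ z l F := fun z l F => by
    simp only [hφ]; split_ifs <;> positivity
  have huniq : ∀ T ∈ FF g A, ∃ z0 ∈ R, ∃ m0 ∈ Finset.range (M + 1), dep T A m0 o z0 := by
    intro T hT
    rw [mem_FF] at hT
    obtain ⟨m, hm, hd⟩ := dep_ex g hT o
    have := dep_bd g hT hd
    exact ⟨_, Finset.mem_filter.2 ⟨dep_root g hT ho hm hd, hm⟩, m, by simp; omega, hd⟩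
  have h1 : ∀ T ∈ FF g A, ((BT n o T).ncard : ℝ) ^ k ≤
      ∑ z ∈ R, ∑ m ∈ Finset.range (M + 1), ∑ x ∈ A ∪ R,
        if dep T A m x z then φ z (pl T m x) (cut T (pl T m x)) else 0 := by
    intro T hT
    obtain ⟨z, hz, m, hm, hd⟩ := huniq T hT
    rw [mem_FF] at hT
    have e0 : ∀ z m x, (0 : ℝ) ≤
        if dep T A m x z then φ z (pl T m x) (cut T (pl T m x)) else 0 := by
      intro z m x; split_ifs; exacts [hφ0 _ _ _, le_rfl]
    refine le_trans ?_ (Finset.single_le_sum (f := fun z => ∑ m ∈ Finset.range (M + 1),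
      ∑ x ∈ A ∪ R, if dep T A m x z then φ z (pl T m x) (cut T (pl T m x)) else 0)
      (fun z _ => Finset.sum_nonneg fun m _ => Finset.sum_nonneg fun x _ => e0 z m x) hz)
    refine le_trans ?_ (Finset.single_le_sum (f := fun m =>
      ∑ x ∈ A ∪ R, if dep T A m x z then φ z (pl T m x) (cut T (pl T m x)) else 0)
      (fun m _ => Finset.sum_nonneg fun x _ => e0 z m x) hm)
    refine le_trans ?_ (Finset.single_le_sum (f := fun x =>
      if dep T A m x z then φ z (pl T m x) (cut T (pl T m x)) else 0)
      (fun x _ => e0 z m x) (Finset.mem_union_left _ ho))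
    simp only [if_pos hd, hφ]
    rw [if_pos (pl_last T m o z hd.1)]
    refine pow_le_pow_left₀ (by positivity) (Nat.cast_le.2 ?_) k
    rw [← Set.ncard_coe_finset]
    exact Set.ncard_le_ncard (BT_sub g hT hd (Finset.mem_filter.1 hz).2) (Finset.finite_toSet _)
  refine (Finset.sum_le_sum h1).trans ?_
  rw [Finset.sum_comm]
  set C := PP n b k (n + 1) with hC
  have hC0 : 0 ≤ C := PP_nonneg n hb k _ (by positivity)
  have hCle : C ≤ k.factorial * (b * (n + 1)) ^ k := by
    have := PP_fac n hb k 0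
    simpa [hC] using this
  set ψ : W → List W → ℝ := fun z l => if l.getLastD z = o then 1 else 0 with hψ
  have h3 : ∀ z ∈ R, (∑ T ∈ FF g A, ∑ m ∈ Finset.range (M + 1), ∑ x ∈ A ∪ R,
        if dep T A m x z then φ z (pl T m x) (cut T (pl T m x)) else 0)
      ≤ ∑ m ∈ Finset.range (M + 1), C * ∑ T ∈ FF g A, if dep T A m o z then 1 else 0 := by
    intro z hz
    have hzA := (Finset.mem_filter.1 hz).2
    rw [Finset.sum_comm]
    refine Finset.sum_le_sum fun m hm => ?_
    have e1 : (∑ T ∈ FF g A, if dep T A m o z then (1 : ℝ) else 0)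
        = ∑ T ∈ FF g A, ∑ x ∈ A ∪ R, if dep T A m x z then ψ z (pl T m x) else 0 := by
      refine Finset.sum_congr rfl fun T _ => ?_
      rw [Finset.sum_eq_single o]
      · split_ifs with h
        · simp only [hψ]; rw [if_pos (pl_last T m o z h.1)]
        · rfl
      · intro x _ hx
        split_ifs with h
        · simp only [hψ]; rw [pl_last T m x z h.1, if_neg hx]
        · rfl
      · intro h; exact absurd (Finset.mem_union_left _ ho) h
    rw [e1, ← transfer g (A ∪ R) m A z (φ z) Finset.subset_union_left (Finset.mem_union_right _ hz)
        hzA, ← transfer g (A ∪ R) m A z (fun l _ => ψ z l) Finset.subset_union_left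
        (Finset.mem_union_right _ hz) hzA, ← PS_mul]
    have hψ0 : ∀ l, 0 ≤ ψ z l := fun l => by simp only [hψ]; split_ifs <;> norm_num
    refine PS_mono g m _ _ _ _ _ (le_refl _) ?_ (fun l =>
      mul_nonneg hC0 (Finset.sum_nonneg fun F _ => hψ0 l))
    intro l hl hlA
    simp only [hφ, hψ]
    split_ifs with h
    · refine (mom g n hb hK k _ _ ?_).trans ?_
      · intro w hw hwA
        rw [Finset.mem_sdiff, List.mem_toFinset] at hwA
        rcases Zl_sub n z l hw with rfl | h
        · exact hzA hwA.1
        · exact hwA.2 h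
      · rw [Finset.sum_const, nsmul_eq_mul, mul_one]
        refine mul_le_mul_of_nonneg_right (PP_mono n hb k _ _ (by positivity) ?_) (tau_pos g _).le
        have := Zl_card n z l
        exact_mod_cast this
    · simp
  refine (Finset.sum_le_sum h3).trans ?_
  simp_rw [← Finset.mul_sum]
  refine mul_le_mul hCle ?_ ?_ (hC0.trans hCle)
  · rw [Finset.sum_congr rfl (fun z _ => Finset.sum_comm), Finset.sum_comm]
    have : tau g A = ∑ T ∈ FF g A, (1 : ℝ) := by simp [tau]
    rw [this]
    refine Finset.sum_le_sum fun T hT => ?_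
    obtain ⟨z0, hz0, m0, hm0, hd0⟩ := huniq T hT
    rw [mem_FF] at hT
    have hu : ∀ z ∈ R, ∀ m, dep T A m o z → m = m0 ∧ z = z0 := by
      intro z hz m hd
      have hmm : m = m0 := by
        rcases lt_trichotomy m m0 with h | h | h
        · exact absurd (hd.1 ▸ hd0.2 m h) (Finset.mem_filter.1 hz).2
        · exact h
        · exact absurd (hd0.1 ▸ hd.2 m0 h) (Finset.mem_filter.1 hz0).2
      refine ⟨hmm, ?_⟩
      rw [← hd.1, ← hd0.1, hmm]
    rw [Finset.sum_eq_single z0]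
    · rw [Finset.sum_eq_single m0]
      · split_ifs <;> norm_num
      · intro m _ hm
        rw [if_neg (fun h => hm (hu z0 hz0 m h).1)]
      · intro h; exact absurd hm0 h
    · intro z hz hzz
      refine Finset.sum_eq_zero fun m _ => ?_
      rw [if_neg (fun h => hzz (hu z hz m h).2)]
    · intro h; exact absurd hz0 h
  · refine Finset.sum_nonneg fun z _ => Finset.sum_nonneg fun m _ =>
      Finset.sum_nonneg fun T _ => ?_
    split_ifs <;> norm_num

theorem expTail {ι : Type} (s : Finset ι) (X : ι → ℝ) {M : ℝ} (hM : 0 < M)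
    (h : ∀ k : ℕ, ∑ i ∈ s, X i ^ k ≤ k.factorial * M ^ k * s.card) (t : ℝ) :
    ((s.filter (fun i => t ≤ X i)).card : ℝ) ≤ 2 * Real.exp (-(t / (2 * M))) * s.card := by
  have h1 : HasSum (fun k : ℕ => ∑ i ∈ s, (X i / (2 * M)) ^ k / k.factorial)
      (∑ i ∈ s, Real.exp (X i / (2 * M))) := by
    refine hasSum_sum fun i _ => ?_
    rw [Real.exp_eq_exp_ℝ]
    exact NormedSpace.expSeries_div_hasSum_exp _
  have h2 : HasSum (fun k : ℕ => (1 / 2 : ℝ) ^ k * s.card) (2 * s.card) :=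
    hasSum_geometric_two.mul_right _
  have h3 : ∑ i ∈ s, Real.exp (X i / (2 * M)) ≤ 2 * s.card := by
    refine hasSum_le (fun k => ?_) h1 h2
    have e : ∑ i ∈ s, (X i / (2 * M)) ^ k / k.factorial
        = (∑ i ∈ s, X i ^ k) / ((2 * M) ^ k * k.factorial) := by
      rw [Finset.sum_div]
      refine Finset.sum_congr rfl fun i _ => ?_
      rw [div_pow, div_div]
    have hf : (0 : ℝ) < k.factorial := by exact_mod_cast k.factorial_pos
    rw [e, div_le_iff₀ (by positivity)]
    refine (h k).trans (le_of_eq ?_)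
    rw [mul_pow, one_div, inv_pow]
    field_simp
  have h4 : ((s.filter (fun i => t ≤ X i)).card : ℝ) * Real.exp (t / (2 * M))
      ≤ ∑ i ∈ s, Real.exp (X i / (2 * M)) := by
    rw [← nsmul_eq_mul, ← Finset.sum_const]
    refine le_trans (Finset.sum_le_sum (g := fun i => Real.exp (X i / (2 * M))) ?_)
      (Finset.sum_le_sum_of_subset_of_nonneg (Finset.filter_subset _ _)
        (fun i _ _ => (Real.exp_pos _).le))
    intro i hi
    refine Real.exp_le_exp.2 ?_
    have := (Finset.mem_filter.1 hi).2
    gcongr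
  rw [Real.exp_neg]
  have h5 := h4.trans h3
  rw [← le_div_iff₀ (Real.exp_pos _)] at h5
  refine h5.trans (le_of_eq ?_)
  ring

end abs5

section conc
variable {d : ℕ}

def ev (p : Fin d × Bool) : V d := Pi.single p.1 (if p.2 then 1 else -1)

theorem ev_inj : Function.Injective (ev (d := d)) := by
  rintro ⟨i, a⟩ ⟨j, b⟩ h
  have h1 := congrFun h i
  have hij : i = j := by
    by_contra hne
    simp only [ev, Pi.single_eq_same, Pi.single_eq_of_ne hne] at h1
    cases a <;> simp at h1
  subst hij
  simp only [ev, Pi.single_eq_same] at h1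
  cases a <;> cases b <;> simp at h1 ⊢

theorem ev_neg (p : Fin d × Bool) : -ev p = ev (p.1, !p.2) := by
  obtain ⟨i, a⟩ := p
  simp only [ev, ← Pi.single_neg]
  cases a <;> simp

noncomputable def nbd (x : V d) : Finset (V d) := Finset.univ.image (fun p => x + ev p)

theorem sum_nbd (x : V d) (f : V d → ℝ) : ∑ w ∈ nbd x, f w = ∑ p, f (x + ev p) := by
  unfold nbd
  rw [Finset.sum_image]
  intro a _ b _ h
  exact ev_inj (add_left_cancel h)

theorem mem_nbd {x y : V d} : y ∈ nbd x ↔ ∃ p, y = x + ev p := by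
  simp [nbd, eq_comm]

theorem ev_ne (p : Fin d × Bool) : ev p ≠ 0 := by
  intro h
  have := congrFun h p.1
  simp only [ev, Pi.single_eq_same, Pi.zero_apply] at this
  split_ifs at this <;> omega

theorem nbd_adj {x y : V d} : y ∈ nbd x ↔ adj x y := by
  rw [mem_nbd]
  constructor
  · rintro ⟨⟨i, a⟩, rfl⟩
    unfold adj
    rw [Finset.sum_eq_single i]
    · cases a <;> simp [ev]
    · intro j _ hj; simp [ev, hj]
    · simp
  · intro h
    unfold adj at h
    have h1 : ∃ i, x i - y i ≠ 0 := by
      by_contra hc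
      push Not at hc
      simp [hc] at h
    obtain ⟨i, hi⟩ := h1
    have h2 := Finset.add_sum_erase Finset.univ (fun i => |x i - y i|) (Finset.mem_univ i)
    have h3 : 1 ≤ |x i - y i| := Int.one_le_abs hi
    have h4 : 0 ≤ ∑ j ∈ Finset.univ.erase i, |x j - y j| := Finset.sum_nonneg fun _ _ => abs_nonneg _
    have h5 : ∑ j ∈ Finset.univ.erase i, |x j - y j| = 0 := by omega
    have h6 : |x i - y i| = 1 := by omega
    have h7 : ∀ j, j ≠ i → y j = x j := by
      intro j hj
      have := (Finset.sum_eq_zero_iff_of_nonneg (fun _ _ => abs_nonneg _)).1 h5 j (by simp [hj])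
      have := abs_eq_zero.1 this
      omega
    rcases (abs_eq (by norm_num)).1 h6 with h8 | h8
    · refine ⟨(i, false), ?_⟩
      funext j
      by_cases hj : j = i
      · subst hj; simp [ev]; omega
      · simp [ev, hj, h7 j hj]
    · refine ⟨(i, true), ?_⟩
      funext j
      by_cases hj : j = i
      · subst hj; simp [ev]; omega
      · simp [ev, hj, h7 j hj]

theorem adj_symm {x y : V d} (h : adj x y) : adj y x := by
  unfold adj at *
  rw [← h]
  exact Finset.sum_congr rfl fun i _ => abs_sub_comm _ _

noncomputable def zg (hd : 0 < d) : Gph (V d) where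
  nb := nbd
  symm := fun x y h => nbd_adj.2 (adj_symm (nbd_adj.1 h))
  irrefl := fun x h => by
    rw [nbd_adj] at h
    simp [adj] at h
  deg := 2 * d
  hdeg := fun x => by
    unfold nbd
    rw [Finset.card_image_of_injective _ (fun a b h => ev_inj (add_left_cancel h))]
    simp [mul_comm]
  st := fun x => x + ev (⟨0, hd⟩, true)
  st_mem := fun x => mem_nbd.2 ⟨_, rfl⟩
  st_esc := by
    intro D x
    by_contra hc
    push Not at hc
    have hit0 : ∀ k : ℕ, ((fun x : V d => x + ev (⟨0, hd⟩, true))^[k] x) ⟨0, hd⟩ = x ⟨0, hd⟩ + k := by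
      intro k
      induction k with
      | zero => simp
      | succ k ih =>
        rw [Function.iterate_succ_apply', Pi.add_apply, ih]
        simp [ev]; ring
    have hinj : Function.Injective (fun k : ℕ =>
        (⟨(fun x : V d => x + ev (⟨0, hd⟩, true))^[k] x, hc k⟩ : D)) := by
      intro a b hab
      have h1 := congrFun (Subtype.ext_iff.1 hab) ⟨0, hd⟩
      simp only [hit0] at h1
      omega
    exact not_injective_infinite_finite _ hinj

def tr (u : V d) (D : Finset (V d)) : Finset (V d) := D.map (addRightEmbedding u)

theorem mem_tr {u x : V d} {D : Finset (V d)} : x ∈ tr u D ↔ x - u ∈ D := by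
  unfold tr
  rw [Finset.mem_map]
  constructor
  · rintro ⟨a, ha, rfl⟩; simpa using ha
  · intro h; exact ⟨x - u, h, by simp⟩

def cj (u : V d) (F : V d → V d) : V d → V d := fun x => F (x - u) + u

theorem cj_iter (u : V d) (F : V d → V d) (k : ℕ) (x : V d) :
    (cj u F)^[k] x = F^[k] (x - u) + u := by
  induction k with
  | zero => simp
  | succ k ih => rw [Function.iterate_succ_apply', ih, Function.iterate_succ_apply']; simp [cj]

theorem nbd_tr {u x y : V d} : x + u ∈ nbd y ↔ x ∈ nbd (y - u) := by
  rw [mem_nbd, mem_nbd]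
  refine exists_congr fun p => ?_
  constructor
  · intro h; rw [eq_sub_of_add_eq h]; abel
  · intro h; rw [h]; abel

theorem cj_mem (hd : 0 < d) (u : V d) {D : Finset (V d)} {F : V d → V d} (hF : isF (zg hd) D F) :
    isF (zg hd) (tr u D) (cj u F) := by
  refine ⟨fun x hx => ?_, fun x hx => ?_, fun x => ?_⟩
  · rw [mem_tr] at hx
    simp [cj, hF.1 _ hx]
  · rw [mem_tr] at hx
    exact nbd_tr.2 (hF.2.1 _ hx)
  · obtain ⟨k, hk⟩ := hF.2.2 (x - u)
    refine ⟨k, ?_⟩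
    rw [cj_iter, mem_tr]
    simpa using hk

theorem tau_tr_le (hd : 0 < d) (u : V d) (D : Finset (V d)) :
    tau (zg hd) D ≤ tau (zg hd) (tr u D) := by
  unfold tau
  refine Nat.cast_le.2 (Finset.card_le_card_of_injOn (cj u) ?_ ?_)
  · intro F hF
    exact (mem_FF _).2 (cj_mem hd u ((mem_FF _).1 hF))
  · intro F _ F' _ h
    funext x
    have := congrFun h (x + u)
    simpa [cj] using this

theorem tau_tr (hd : 0 < d) (u : V d) (D : Finset (V d)) :
    tau (zg hd) (tr u D) = tau (zg hd) D := by
  refine le_antisymm ?_ (tau_tr_le hd u D)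
  have h := tau_tr_le hd (-u) (tr u D)
  have e : tr (-u) (tr u D) = D := by
    ext x; rw [mem_tr, mem_tr]; simp
  rwa [e] at h

theorem PS_tr (hd : 0 < d) (u : V d) (m : ℕ) : ∀ (D : Finset (V d)) (z : V d) (φ : List (V d) → ℝ),
    PS (zg hd) m (tr u D) (z + u) φ = PS (zg hd) m D z (fun l => φ (l.map (· + u))) := by
  induction m with
  | zero => intro D z φ; simp [PS]
  | succ m ih =>
    intro D z φ
    unfold PS
    rw [Finset.sum_filter, Finset.sum_filter]
    refine (sum_nbd _ _).trans (Eq.trans ?_ (sum_nbd _ _).symm)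
    refine Finset.sum_congr rfl fun p _ => ?_
    have e : z + u + ev p = (z + ev p) + u := by abel
    have e3 : z + ev p + u ∈ tr u D ↔ z + ev p ∈ D := by rw [mem_tr, add_sub_cancel_right]
    rw [e]
    by_cases hm : z + ev p ∈ D
    · rw [if_pos hm, if_pos (e3.2 hm)]
      have e2 : (tr u D).erase (z + ev p + u) = tr u (D.erase (z + ev p)) := by
        ext x
        rw [Finset.mem_erase, mem_tr, mem_tr, Finset.mem_erase, Ne, Ne, sub_eq_iff_eq_add]
      rw [e2, ih]
      rfl
    · rw [if_neg hm, if_neg (fun h => hm (e3.1 h))]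

theorem PS_tau_tr (hd : 0 < d) (u : V d) (m : ℕ) (D : Finset (V d)) (z : V d) :
    PS (zg hd) m (tr u D) (z + u) (fun l => tau (zg hd) (tr u D \ l.toFinset))
      = PS (zg hd) m D z (fun l => tau (zg hd) (D \ l.toFinset)) := by
  rw [PS_tr]
  congr 1
  funext l
  rw [← tau_tr hd u (D \ l.toFinset)]
  congr 1
  ext x
  simp only [mem_tr, Finset.mem_sdiff, List.mem_toFinset, List.mem_map]
  constructor
  · rintro ⟨h1, h2⟩
    exact ⟨h1, fun h => h2 ⟨_, h, by simp⟩⟩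
  · rintro ⟨h1, h2⟩
    refine ⟨h1, ?_⟩
    rintro ⟨a, ha, rfl⟩
    exact h2 (by simpa using ha)

noncomputable def cubeF (d : ℕ) (L : ℕ) : Finset (V d) := Fintype.piFinset (fun _ => Finset.Icc (-(L : ℤ)) L)

theorem mem_cubeF {L : ℕ} {x : V d} : x ∈ cubeF d L ↔ ∀ i, |x i| ≤ L := by
  simp [cubeF, abs_le]

theorem card_cubeF (L : ℕ) : (cubeF d L).card = (2 * L + 1) ^ d := by
  unfold cubeF
  rw [Fintype.card_piFinset]
  simp
  congr 1
  omega

theorem sub_cube (s : Finset (V d)) : ∃ L, s ⊆ cubeF d L := by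
  refine ⟨s.sup (fun x => Finset.univ.sup (fun i => (x i).natAbs)), ?_⟩
  intro x hx
  rw [mem_cubeF]
  intro i
  have h1 : (x i).natAbs ≤ Finset.univ.sup (fun i => (x i).natAbs) :=
    Finset.le_sup (f := fun i => (x i).natAbs) (Finset.mem_univ i)
  have h2 := Finset.le_sup (f := fun x : V d => Finset.univ.sup (fun i => (x i).natAbs)) hx
  rw [Int.abs_eq_natAbs]
  exact_mod_cast h1.trans h2

theorem lap_tr (hd : 0 < d) (H : V d → ℝ) (z x : V d) :
    lap (zg hd) (fun y => H (y - z)) x = lap (zg hd) H (x - z) := by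
  unfold lap
  congr 1
  refine (sum_nbd _ _).trans (Eq.trans ?_ (sum_nbd _ _).symm)
  refine Finset.sum_congr rfl fun p _ => ?_
  congr 1
  abel

theorem lemK (hd : 0 < d) (H : V d → ℝ) (hH : ∀ x, 0 ≤ H x)
    (hl : ∀ x, (if x = 0 then 1 else 0) ≤ lap (zg hd) H x) (S : ℝ)
    (hS : ∀ L, ∑ x ∈ cubeF d L, H x ^ 2 ≤ S) (n : ℕ) (D : Finset (V d)) (z : V d) (hz : z ∉ D) :
    ∑ m ∈ Finset.range n, PS (zg hd) m D z (fun l => tau (zg hd) (D \ l.toFinset))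
      ≤ (((2 * d : ℕ) : ℝ) ^ 2 * S * 2 ^ d * n) * tau (zg hd) D := by
  obtain ⟨L, hL⟩ := sub_cube (insert z D)
  set Λ := cubeF d (2 * L) with hΛ
  set U := cubeF d L with hU
  set S0 := ∑ m ∈ Finset.range n, PS (zg hd) m D z (fun l => tau (zg hd) (D \ l.toFinset)) with hS0
  set f : V d → ℝ := fun x => ∑ j ∈ Finset.range n, fd (zg hd) Λ j x with hf
  have hf0 : ∀ x, 0 ≤ f x := fun x => Finset.sum_nonneg fun j _ => fd_nonneg _ _ _ _
  set G : ℝ := ((2 * d : ℕ) : ℝ) with hG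
  have hdeg : ((zg hd).deg : ℝ) = G := rfl
  have hS1 : ∀ s : Finset (V d), ∑ x ∈ s, H x ^ 2 ≤ S := by
    intro s
    obtain ⟨L', hL'⟩ := sub_cube s
    exact (Finset.sum_le_sum_of_subset_of_nonneg hL' (fun _ _ _ => by positivity)).trans (hS L')
  have hSn : 0 ≤ S := by simpa using hS1 ∅
  have hτD := tau_pos (zg hd) D
  have key : ∀ u ∈ U, S0 ≤ tau (zg hd) D * (G ^ 2 * ∑ x ∈ Λ, f x * H (x - z - u) ^ 2) := by
    intro u hu
    have hadd : ∀ x ∈ insert z D, x + u ∈ Λ := by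
      intro x hx
      rw [hΛ, mem_cubeF]
      intro i
      have h1 := mem_cubeF.1 (hL hx) i
      have h2 := mem_cubeF.1 hu i
      have h3 := abs_add_le (x i) (u i)
      push_cast
      simp only [Pi.add_apply]
      linarith
    have hzΛ : z + u ∈ Λ := hadd z (Finset.mem_insert_self _ _)
    have hsub : tr u D ⊆ Λ.erase (z + u) := by
      intro x hx
      rw [mem_tr] at hx
      rw [Finset.mem_erase]
      constructor
      · rintro rfl; simp at hx; exact hz hx
      · have := hadd _ (Finset.mem_insert_of_mem hx)
        simpa using this
    have hm := mainA (zg hd) hzΛ n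
    set E := tau (zg hd) (Λ.erase (z + u)) with hE
    have hE0 : 0 < E := tau_pos _ _
    have h1 : S0 * E ≤ tau (zg hd) D * ∑ m ∈ Finset.range n, PS (zg hd) m (Λ.erase (z + u)) (z + u)
        (fun l => tau (zg hd) (Λ.erase (z + u) \ l.toFinset)) := by
      rw [hS0, Finset.sum_mul, Finset.mul_sum]
      refine Finset.sum_le_sum fun m _ => ?_
      rw [← PS_tau_tr hd u, mul_comm, ← PS_mul, ← PS_mul]
      refine PS_mono _ _ _ _ _ _ _ hsub ?_ ?_
      · intro l _ hl
        have := Mon (zg hd) l.toFinset hsub (fun x hx => hl x (List.mem_toFinset.1 hx))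
        rw [tau_tr] at this
        linarith
      · intro l
        exact mul_nonneg hτD.le (tau_pos _ _).le
    have h2 : ∑ x ∈ Λ, Gr (zg hd) Λ (z + u) x * (Gr (zg hd) Λ (z + u) x * f x)
        ≤ ∑ x ∈ Λ, f x * H (x - z - u) ^ 2 := by
      refine Finset.sum_le_sum fun x _ => ?_
      have hg0 := Gr_nonneg (zg hd) Λ (z + u) x
      have hg1 := Gr_le (zg hd) hzΛ (fun y => H (y - (z + u))) (fun y => hH _) (fun y => by
        rw [lap_tr]
        have := hl (y - (z + u))
        simpa [sub_eq_zero] using this) x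
      simp only [← sub_sub] at hg1
      have : Gr (zg hd) Λ (z + u) x ^ 2 ≤ H (x - z - u) ^ 2 := pow_le_pow_left₀ hg0 hg1 2
      nlinarith [mul_le_mul_of_nonneg_left this (hf0 x)]
    have h3 := tau_le (zg hd) Λ hzΛ
    rw [hdeg] at h3 hm
    set Q := ∑ x ∈ Λ, f x * H (x - z - u) ^ 2 with hQ
    have hQ0 : 0 ≤ Q := Finset.sum_nonneg fun x _ => mul_nonneg (hf0 x) (by positivity)
    have hG0 : 0 ≤ G := Nat.cast_nonneg _
    have h4 : S0 * E ≤ (tau (zg hd) D * (G ^ 2 * Q)) * E := by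
      refine h1.trans ?_
      rw [mul_assoc]
      refine mul_le_mul_of_nonneg_left ?_ hτD.le
      refine hm.trans ?_
      calc _ ≤ G * ((G * E) * Q) := by
            refine mul_le_mul_of_nonneg_left ?_ hG0
            refine mul_le_mul h3 h2 ?_ (by positivity)
            exact Finset.sum_nonneg fun x _ => mul_nonneg (Gr_nonneg _ _ _ _)
              (mul_nonneg (Gr_nonneg _ _ _ _) (hf0 x))
        _ = _ := by ring
    exact le_of_mul_le_mul_right h4 hE0
  have h5 := Finset.sum_le_sum key
  rw [Finset.sum_const, nsmul_eq_mul, ← Finset.mul_sum, ← Finset.mul_sum, Finset.sum_comm] at h5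
  have h6 : ∑ x ∈ Λ, ∑ u ∈ U, f x * H (x - z - u) ^ 2 ≤ S * (n * Λ.card) := by
    calc _ ≤ ∑ x ∈ Λ, f x * S := by
          refine Finset.sum_le_sum fun x _ => ?_
          rw [← Finset.mul_sum]
          refine mul_le_mul_of_nonneg_left ?_ (hf0 x)
          have := hS1 (U.image (fun u => x - z - u))
          rwa [Finset.sum_image (fun a _ b _ h => sub_right_injective h)] at this
      _ = S * ∑ j ∈ Finset.range n, ∑ x ∈ Λ, fd (zg hd) Λ j x := by
          rw [← Finset.sum_mul, mul_comm, Finset.sum_comm]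
      _ ≤ S * ∑ j ∈ Finset.range n, (Λ.card : ℝ) :=
          mul_le_mul_of_nonneg_left (Finset.sum_le_sum fun j _ => fd_sum _ _ _) hSn
      _ = _ := by simp
  have h7 : (Λ.card : ℝ) ≤ 2 ^ d * U.card := by
    rw [hΛ, hU, card_cubeF, card_cubeF]
    have : (2 * (2 * L) + 1) ^ d ≤ 2 ^ d * (2 * L + 1) ^ d := by
      rw [← mul_pow]
      exact Nat.pow_le_pow_left (by omega) d
    exact_mod_cast this
  have hU0 : (0 : ℝ) < U.card := by
    rw [hU, card_cubeF]; positivity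
  refine le_of_mul_le_mul_left (h5.trans ?_) hU0
  calc _ ≤ tau (zg hd) D * (G ^ 2 * (S * (n * (2 ^ d * U.card)))) := by gcongr; exact h6.trans (by gcongr)
    _ = _ := by ring

end conc

section conc2
variable {d : ℕ}

theorem taylor2 (β γ : ℝ) (h : β * (β + 1) < γ) :
    ∃ δ : ℝ, 0 < δ ∧ δ ≤ 1 / 2 ∧ ∀ y : ℝ, |y| ≤ δ →
      (1 + y) ^ (-β) ≤ 1 - β * y + γ / 2 * y ^ 2 := by
  set f : ℝ → ℝ := fun y => 1 - β * y + γ / 2 * y ^ 2 - (1 + y) ^ (-β) with hf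
  set f1 : ℝ → ℝ := fun y => -β + γ * y + β * (1 + y) ^ (-β - 1) with hf1
  have hder : ∀ p y : ℝ, 0 < 1 + y → HasDerivAt (fun y : ℝ => (1 + y) ^ p) (p * (1 + y) ^ (p - 1)) y := by
    intro p y hy
    have h1 : HasDerivAt (fun y : ℝ => 1 + y) 1 y := (hasDerivAt_id y).const_add 1
    have := h1.rpow_const (p := p) (Or.inl hy.ne')
    simpa using this
  have hd1 : ∀ y : ℝ, 0 < 1 + y → HasDerivAt f (f1 y) y := by
    intro y hy
    have h1 := ((((hasDerivAt_id y).const_mul β).const_sub 1).add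
      (((hasDerivAt_id y).pow 2).const_mul (γ / 2))).sub (hder (-β) y hy)
    refine h1.congr_deriv ?_
    simp [hf1]; ring
  have hd2 : HasDerivAt f1 (γ - β * (β + 1)) 0 := by
    have h1 := ((((hasDerivAt_id (0:ℝ)).const_mul γ).const_add (-β))).add
      ((hder (-β - 1) 0 (by norm_num)).const_mul β)
    refine h1.congr_deriv ?_
    simp; ring
  have hev : deriv f =ᶠ[nhds 0] f1 := by
    filter_upwards [Ioi_mem_nhds (show (-1 : ℝ) < 0 by norm_num)] with y hy
    exact (hd1 y (by simp at hy; linarith)).deriv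
  have h0 := hd1 0 (by norm_num)
  have hmin : IsLocalMin f 0 := by
    refine isLocalMin_of_deriv_deriv_pos ?_ ?_ h0.continuousAt
    · rw [hev.deriv_eq, hd2.deriv]; linarith
    · rw [h0.deriv]; simp [hf1]
  obtain ⟨ε, hε, hball⟩ := Metric.eventually_nhds_iff.1 hmin
  refine ⟨min (ε / 2) (1 / 2), by positivity, min_le_right _ _, fun y hy => ?_⟩
  have := hball (y := y) (by
    rw [Real.dist_eq, sub_zero]
    have := min_le_left (ε / 2) (1 / 2)
    linarith)
  simp [hf] at this
  linarith

noncomputable def qf (x : V d) : ℝ := ∑ i, (x i : ℝ) ^ 2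

theorem qf_nonneg (x : V d) : 0 ≤ qf x := Finset.sum_nonneg fun i _ => by positivity

theorem qf_ge (x : V d) (i : Fin d) : (x i : ℝ) ^ 2 ≤ qf x :=
  Finset.single_le_sum (f := fun i => (x i : ℝ) ^ 2) (fun i _ => by positivity) (Finset.mem_univ i)

def sg (a : Bool) : ℝ := if a then 1 else -1

theorem qf_ev (x : V d) (p : Fin d × Bool) : qf (x + ev p) = qf x + (1 + 2 * sg p.2 * x p.1) := by
  obtain ⟨i, a⟩ := p
  unfold qf
  rw [← Finset.add_sum_erase _ _ (Finset.mem_univ i), ← Finset.add_sum_erase _ (fun i => (x i : ℝ) ^ 2) (Finset.mem_univ i)]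
  have : ∑ j ∈ Finset.univ.erase i, (((x + ev (i, a)) j : ℤ) : ℝ) ^ 2 = ∑ j ∈ Finset.univ.erase i, (x j : ℝ) ^ 2 := by
    refine Finset.sum_congr rfl fun j hj => ?_
    have : j ≠ i := Finset.ne_of_mem_erase hj
    simp [ev, this]
  rw [this]
  cases a <;> simp [ev, sg] <;> ring

theorem lapH (hd : 0 < d) {β K δ : ℝ} (hβ : 0 < β) (hδ : 0 < δ) (hδ1 : δ ≤ 1 / 2)
    (hT : ∀ y : ℝ, |y| ≤ δ → (1 + y) ^ (-β) ≤ 1 - β * y + (d * β / 2) / 2 * y ^ 2)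
    (hK : 2 / δ ^ 2 + d ≤ K) (x : V d) :
    (K + qf x) ^ (-β) * ((d * β / 2) / (K + qf x) ^ 2 * (4 * K - d))
      ≤ lap (zg hd) (fun y => (K + qf y) ^ (-β)) x := by
  have hq := qf_nonneg x
  have hK0 : 0 < K := by
    have : 0 < 2 / δ ^ 2 := by positivity
    have : (0 : ℝ) ≤ d := Nat.cast_nonneg _
    linarith
  set s := K + qf x with hs
  have hs0 : 0 < s := by linarith
  have hKδ : 2 ≤ K * δ ^ 2 := by
    have h1 : 2 / δ ^ 2 ≤ K := by
      have : (0 : ℝ) ≤ d := Nat.cast_nonneg _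
      linarith
    rwa [div_le_iff₀ (by positivity)] at h1
  have hy : ∀ p : Fin d × Bool, |(1 + 2 * sg p.2 * x p.1) / s| ≤ δ := by
    intro p
    rw [abs_div, abs_of_pos hs0, div_le_iff₀ hs0]
    have h1 : |1 + 2 * sg p.2 * (x p.1 : ℝ)| ≤ 1 + 2 * |(x p.1 : ℝ)| := by
      refine (abs_add_le _ _).trans ?_
      have : |sg p.2| = 1 := by cases p.2 <;> simp [sg]
      rw [abs_mul, abs_mul, this]; norm_num
    refine h1.trans ?_
    have h2 := qf_ge x p.1
    have h3 : |(x p.1 : ℝ)| ^ 2 = (x p.1 : ℝ) ^ 2 := sq_abs _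
    set t := |(x p.1 : ℝ)| with ht
    have h4 : δ * (K + t ^ 2) ≤ δ * s := by
      refine mul_le_mul_of_nonneg_left ?_ hδ.le
      rw [h3]; linarith
    refine le_trans ?_ h4
    refine le_of_mul_le_mul_left ?_ hδ
    nlinarith [sq_nonneg (δ * t - 1)]
  have hterm : ∀ p : Fin d × Bool, (K + qf (x + ev p)) ^ (-β) ≤
      s ^ (-β) * (1 - β * ((1 + 2 * sg p.2 * x p.1) / s)
        + (d * β / 2) / 2 * ((1 + 2 * sg p.2 * x p.1) / s) ^ 2) := by
    intro p
    have h1 := hT _ (hy p)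
    have h2 : K + qf (x + ev p) = s * (1 + (1 + 2 * sg p.2 * x p.1) / s) := by
      rw [qf_ev]; field_simp; rw [hs]; ring
    have h3 := (abs_le.1 (hy p)).1
    rw [h2, Real.mul_rpow hs0.le (by linarith)]
    exact mul_le_mul_of_nonneg_left h1 (Real.rpow_nonneg hs0.le _)
  have hsum : ∑ p : Fin d × Bool, (s ^ (-β) * (1 - β * ((1 + 2 * sg p.2 * x p.1) / s)
        + (d * β / 2) / 2 * ((1 + 2 * sg p.2 * x p.1) / s) ^ 2))
      = s ^ (-β) * (2 * d - β * (2 * d / s) + (d * β / 2) / 2 * ((2 * d + 8 * qf x) / s ^ 2)) := by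
    rw [← Finset.mul_sum]
    congr 1
    rw [Fintype.sum_prod_type]
    simp only [Fintype.sum_bool]
    have : ∀ i : Fin d, (1 - β * ((1 + 2 * sg true * x i) / s)
        + (d * β / 2) / 2 * ((1 + 2 * sg true * x i) / s) ^ 2)
        + (1 - β * ((1 + 2 * sg false * x i) / s)
        + (d * β / 2) / 2 * ((1 + 2 * sg false * x i) / s) ^ 2)
        = (2 - β * (2 / s) + (d * β / 2) / 2 * (2 / s ^ 2)) + ((d * β / 2) / 2 * (8 / s ^ 2)) * (x i : ℝ) ^ 2 := by
      intro i
      simp only [sg]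
      simp
      field_simp
      ring
    rw [Finset.sum_congr rfl (fun i _ => this i), Finset.sum_add_distrib, ← Finset.mul_sum]
    simp only [Finset.sum_const, Finset.card_univ, Fintype.card_fin, nsmul_eq_mul]
    unfold qf
    field_simp
    ring
  have hle := (Finset.sum_le_sum (fun p (_ : p ∈ Finset.univ) => hterm p)).trans (le_of_eq hsum)
  have hlap : lap (zg hd) (fun y => (K + qf y) ^ (-β)) x
      = 2 * d * s ^ (-β) - ∑ p, (K + qf (x + ev p)) ^ (-β) := by
    have : ∑ w ∈ (zg hd).nb x, (K + qf w) ^ (-β) = ∑ p, (K + qf (x + ev p)) ^ (-β) := sum_nbd x _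
    unfold lap
    rw [this]
    have : ((zg hd).deg : ℝ) = 2 * d := by
      show ((2 * d : ℕ) : ℝ) = _
      push_cast; ring
    rw [this]
  rw [hlap]
  have hfin : s ^ (-β) * ((d * β / 2) / s ^ 2 * (4 * K - d))
      = 2 * d * s ^ (-β) - s ^ (-β) * (2 * d - β * (2 * d / s)
        + (d * β / 2) / 2 * ((2 * d + 8 * qf x) / s ^ 2)) := by
    have : qf x = s - K := by rw [hs]; ring
    rw [this]
    field_simp
    ring
  rw [hfin]
  linarith

theorem sumH {β K : ℝ} (hd : 0 < d) (hK : 1 ≤ K) (hβ : (d : ℝ) / 4 < β) :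
    ∃ S : ℝ, ∀ L, ∑ x ∈ cubeF d L, ((K + qf x) ^ (-β)) ^ 2 ≤ S := by
  have hd0 : (0 : ℝ) < d := Nat.cast_pos.2 hd
  have hβ0 : 0 < β := lt_trans (by positivity) hβ
  set p : ℝ := 2 * β / d with hp
  have hp0 : 0 < p := by positivity
  have hp1 : 1 < 2 * p := by
    rw [hp, ← mul_div_assoc, lt_div_iff₀ hd0]; linarith
  set a : ℤ → ℝ := fun k => (1 + (k : ℝ) ^ 2) ^ (-p) with ha
  have ha0 : ∀ k, 0 ≤ a k := fun k => Real.rpow_nonneg (by positivity) _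
  have hsum : Summable a := by
    have h1 := Real.summable_abs_int_rpow hp1
    have h2 : Summable (fun k : ℤ => if k = 0 then (1 : ℝ) else 0) := (hasSum_ite_eq 0 1).summable
    refine Summable.of_nonneg_of_le ha0 (fun k => ?_) (h1.add h2)
    by_cases hk : k = 0
    · subst hk
      simp only [ha, Int.cast_zero, abs_zero, if_true]
      have : (0 : ℝ) ≤ 0 ^ (-(2 * p)) := Real.rpow_nonneg le_rfl _
      norm_num
      exact Real.rpow_nonneg le_rfl _
    · rw [if_neg hk, add_zero]
      have hk' : (0 : ℝ) < |(k : ℝ)| := abs_pos.2 (Int.cast_ne_zero.2 hk)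
      have : |(k : ℝ)| ^ (-(2 * p)) = (|(k : ℝ)| ^ 2) ^ (-p) := by
        rw [← Real.rpow_natCast, ← Real.rpow_mul hk'.le]
        congr 1
        push_cast; ring
      rw [this, sq_abs]
      refine Real.rpow_le_rpow_of_nonpos (by positivity) (by linarith) (by linarith)
  refine ⟨(∑' k, a k) ^ d, fun L => ?_⟩
  have hterm : ∀ x : V d, ((K + qf x) ^ (-β)) ^ 2 ≤ ∏ i, a (x i) := by
    intro x
    have hs : 0 < K + qf x := by have := qf_nonneg x; linarith
    have h1 : ((K + qf x) ^ (-β)) ^ 2 = ((K + qf x) ^ (-p)) ^ d := by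
      rw [← Real.rpow_natCast, ← Real.rpow_natCast, ← Real.rpow_mul hs.le, ← Real.rpow_mul hs.le]
      congr 1
      rw [hp]; push_cast; field_simp
    have h2 : ((K + qf x) ^ (-p)) ^ d = ∏ _i : Fin d, (K + qf x) ^ (-p) := by simp
    rw [h1, h2]
    refine Finset.prod_le_prod (fun i _ => Real.rpow_nonneg hs.le _) (fun i _ => ?_)
    refine Real.rpow_le_rpow_of_nonpos (by positivity) ?_ (by linarith)
    have := qf_ge x i
    linarith
  refine (Finset.sum_le_sum fun x _ => hterm x).trans ?_
  unfold cubeF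
  rw [Finset.sum_prod_piFinset (Finset.Icc (-(L : ℤ)) L) (fun _ k => a k)]
  simp only [Finset.prod_const, Finset.card_univ, Fintype.card_fin]
  refine pow_le_pow_left₀ (Finset.sum_nonneg fun k _ => ha0 k) ?_ d
  exact hsum.sum_le_tsum _ (fun k _ => ha0 k)

theorem exH (hd : 0 < d) (hd5 : 5 ≤ d) : ∃ H : V d → ℝ, (∀ x, 0 ≤ H x) ∧
    (∀ x, (if x = 0 then 1 else 0) ≤ lap (zg hd) H x) ∧
    ∃ S : ℝ, ∀ L, ∑ x ∈ cubeF d L, H x ^ 2 ≤ S := by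
  have h5 : (5 : ℝ) ≤ d := by exact_mod_cast hd5
  set β : ℝ := (3 * d - 4) / 8 with hβ
  have hβ1 : (d : ℝ) / 4 < β := by rw [hβ]; linarith
  have hβ0 : 0 < β := by linarith
  obtain ⟨δ, hδ, hδ1, hT⟩ := taylor2 β (d * β / 2) (by
    have : β + 1 < d / 2 := by rw [hβ]; linarith
    nlinarith)
  set K : ℝ := 2 / δ ^ 2 + d with hK
  have hKd : (d : ℝ) ≤ K := by
    have : 0 < 2 / δ ^ 2 := by positivity
    linarith
  have hL := lapH hd hβ0 hδ hδ1 hT (le_refl K)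
  obtain ⟨S, hS⟩ := sumH (K := K) hd (by linarith) hβ1
  have hlow : ∀ x : V d, 0 < (K + qf x) ^ (-β) * ((d * β / 2) / (K + qf x) ^ 2 * (4 * K - d)) := by
    intro x
    have hs : 0 < K + qf x := by have := qf_nonneg x; linarith
    have h2 : 0 < 4 * K - d := by linarith
    have h3 : 0 < (K + qf x) ^ (-β) := Real.rpow_pos_of_pos hs _
    positivity
  set v := lap (zg hd) (fun y => (K + qf y) ^ (-β)) 0 with hv
  have hv0 : 0 < v := lt_of_lt_of_le (hlow 0) (hL 0)
  refine ⟨fun x => v⁻¹ * (K + qf x) ^ (-β), ?_, ?_, v⁻¹ ^ 2 * S, ?_⟩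
  · intro x
    have hs : 0 < K + qf x := by have := qf_nonneg x; linarith
    have h3 : 0 < (K + qf x) ^ (-β) := Real.rpow_pos_of_pos hs _
    positivity
  · intro x
    rw [lap_smul]
    split_ifs with h
    · subst h
      rw [← hv, inv_mul_cancel₀ hv0.ne']
    · exact mul_nonneg (inv_nonneg.2 hv0.le) ((hlow x).le.trans (hL x))
  · intro L
    simp_rw [mul_pow]
    rw [← Finset.mul_sum]
    exact mul_le_mul_of_nonneg_left (hS L) (by positivity)

theorem momZ (hd : 0 < d) (hd5 : 5 ≤ d) : ∃ B : ℝ, 0 < B ∧ ∀ (n : ℕ) (A : Finset (V d)) (o : V d),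
    o ∈ A → ∀ t : ℝ, (((FF (zg hd) A).filter (fun T => t ≤ ((BT n o T).ncard : ℝ))).card : ℝ)
      ≤ 2 * Real.exp (-(t / (2 * (B * (n + 1) ^ 2)))) * tau (zg hd) A := by
  obtain ⟨H, hH, hl, S, hS⟩ := exH hd hd5
  have hSn : 0 ≤ S := (Finset.sum_nonneg fun x _ => by positivity).trans (hS 0)
  set B : ℝ := ((2 * d : ℕ) : ℝ) ^ 2 * S * 2 ^ d + 1 with hB
  have hB0 : 0 < B := by positivity
  refine ⟨B, hB0, fun n A o ho t => ?_⟩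
  have h1 := fun k => mom0 (zg hd) n (b := B * (n + 1)) (by positivity) (fun D z hz => by
    refine (lemK hd H hH hl S hS (n + 1) D z hz).trans ?_
    refine mul_le_mul_of_nonneg_right ?_ (tau_pos _ _).le
    push_cast
    refine mul_le_mul_of_nonneg_right ?_ (by positivity)
    rw [hB]; push_cast; linarith) k A o ho
  have := expTail (FF (zg hd) A) (fun T => ((BT n o T).ncard : ℝ)) (M := B * (n + 1) ^ 2)
    (by positivity) (fun k => by
      refine (h1 k).trans (le_of_eq ?_)
      unfold tau
      ring) t
  exact this

end conc2

section fin
variable {d : ℕ}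

def eg (A : Finset (V d)) (F : V d → V d) : Set (Sym2 (V d)) := (fun x => s(x, F x)) '' (A : Set (V d))

theorem eg_path {hd : 0 < d} {A : Finset (V d)} {F : V d → V d} (hF : isF (zg hd) A F) (k : ℕ) :
    ∀ x, F^[k] x ∉ A → ∃ l : List (V d),
          l.IsChain (fun u w => adj u w ∧ s(u, w) ∈ eg A F) ∧
          l.head? = some x ∧ ∃ y, l.getLast? = some y ∧ y ∉ (A : Set (V d)) := by
  induction k with
  | zero => intro x hx; exact ⟨[x], by simp, rfl, x, rfl, hx⟩
  | succ k ih =>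
    intro x hx
    by_cases hxA : x ∈ A
    · obtain ⟨l, h1, h2, y, h3, h4⟩ := ih (F x) hx
      cases l with
      | nil => simp at h2
      | cons v l =>
        simp at h2
        subst h2
        refine ⟨x :: F x :: l, ?_, rfl, y, ?_, h4⟩
        · rw [List.isChain_cons_cons]
          exact ⟨⟨nbd_adj.1 (hF.2.1 x hxA), x, hxA, rfl⟩, h1⟩
        · rw [List.getLast?_cons_cons]; exact h3
    · exact ⟨[x], by simp, rfl, x, rfl, hxA⟩

theorem eg_inj1 {hd : 0 < d} {A : Finset (V d)} {F : V d → V d} (hF : isF (zg hd) A F) :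
    Set.InjOn (fun x => s(x, F x)) (A : Set (V d)) := by
  intro x hx y hy h
  by_contra hne
  simp only [Sym2.eq_iff] at h
  rcases h with h | h
  · exact hne h.1
  · refine no_cycle (zg hd) hF (x := x) (k := 1) ?_ hx
    show F (F x) = x
    rw [h.2, ← h.1]

theorem eg_mem {hd : 0 < d} {A : Finset (V d)} {F : V d → V d} (hF : isF (zg hd) A F) :
    eg A F ∈ wiredSpanningTrees (A : Set (V d)) := by
  refine ⟨?_, ?_, ?_⟩
  · rintro e ⟨x, hx, rfl⟩
    exact ⟨⟨x, F x, rfl, nbd_adj.1 (hF.2.1 x hx)⟩, x, by simp, hx⟩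
  · exact Set.ncard_image_of_injOn (eg_inj1 hF)
  · intro x _
    obtain ⟨k, hk⟩ := hF.2.2 x
    exact eg_path hF k x hk

theorem eg_inj {hd : 0 < d} {A : Finset (V d)} {F F' : V d → V d} (hF : isF (zg hd) A F)
    (hF' : isF (zg hd) A F') (h : eg A F = eg A F') : F = F' := by
  funext x
  by_contra hne
  have step : ∀ x, x ∈ A → F x ≠ F' x → F' x ∈ A ∧ F (F' x) ≠ F' (F' x) := by
    intro x hx hne
    have hm : s(x, F' x) ∈ eg A F := by rw [h]; exact ⟨x, hx, rfl⟩
    obtain ⟨y, hy, hxy⟩ := hm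
    simp only [Sym2.eq_iff] at hxy
    rcases hxy with ⟨rfl, h2⟩ | ⟨rfl, h2⟩
    · exact absurd h2 hne
    · refine ⟨hy, ?_⟩
      rw [h2]
      intro hc
      exact no_cycle (zg hd) hF' (x := x) (k := 1) hc.symm hx
  have hxA : x ∈ A := by
    by_contra hx
    exact hne (by rw [hF.1 x hx, hF'.1 x hx])
  have hall : ∀ k, F'^[k] x ∈ A ∧ F (F'^[k] x) ≠ F' (F'^[k] x) := by
    intro k
    induction k with
    | zero => exact ⟨hxA, hne⟩
    | succ k ih => rw [Function.iterate_succ_apply']; exact step _ ih.1 ih.2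
  obtain ⟨k, hk⟩ := hF'.2.2 x
  exact hk (hall k).1

def RR (A : Set (V d)) (T : Set (Sym2 (V d))) : ℕ → V d → Prop
  | 0, x => x ∉ A
  | k + 1, x => ∃ y, (adj x y ∧ s(x, y) ∈ T) ∧ RR A T k y

theorem RR_of (A : Set (V d)) (T : Set (Sym2 (V d))) (l : List (V d)) : ∀ x,
    l.IsChain (fun u w => adj u w ∧ s(u, w) ∈ T) → l.head? = some x →
    (∃ y, l.getLast? = some y ∧ y ∉ A) → ∃ k, RR A T k x := by
  induction l with
  | nil => intro x _ h; simp at h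
  | cons v l ih =>
    rintro x h1 h2 ⟨y, h3, h4⟩
    simp at h2
    subst h2
    cases l with
    | nil =>
      simp at h3
      subst h3
      exact ⟨0, h4⟩
    | cons w l =>
      rw [List.isChain_cons_cons] at h1
      rw [List.getLast?_cons_cons] at h3
      obtain ⟨k, hk⟩ := ih w h1.2 rfl ⟨y, h3, h4⟩
      exact ⟨k + 1, w, h1.1, hk⟩

theorem eg_surj (hd : 0 < d) {A : Finset (V d)} (hA : A.Nonempty) {T : Set (Sym2 (V d))}
    (hT : T ∈ wiredSpanningTrees (A : Set (V d))) : ∃ F, isF (zg hd) A F ∧ eg A F = T := by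
  obtain ⟨h1, h2, h3⟩ := hT
  have hR : ∀ x, ∃ k, RR (A : Set (V d)) T k x := by
    intro x
    by_cases hx : x ∈ A
    · obtain ⟨l, a, b, c⟩ := h3 x hx
      exact RR_of _ _ l x a b c
    · exact ⟨0, hx⟩
  have hstep : ∀ x, ∃ y, (x ∉ A → y = x) ∧ (x ∈ A → (adj x y ∧ s(x, y) ∈ T) ∧
      Nat.find (hR y) < Nat.find (hR x)) := by
    intro x
    by_cases hx : x ∈ A
    · have hs := Nat.find_spec (hR x)
      cases hk : Nat.find (hR x) with
      | zero => rw [hk] at hs; exact absurd hx hs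
      | succ k =>
        rw [hk] at hs
        obtain ⟨y, hy, hyk⟩ := hs
        refine ⟨y, fun h => absurd hx h, fun _ => ⟨hy, ?_⟩⟩
        exact Nat.lt_succ_of_le (Nat.find_min' _ hyk)
    · exact ⟨x, fun _ => rfl, fun h => absurd h hx⟩
  choose F hF1 hF2 using hstep
  have hexit : ∀ N x, Nat.find (hR x) ≤ N → ∃ k : ℕ, F^[k] x ∉ A := by
    intro N
    induction N with
    | zero =>
      intro x hx
      refine ⟨0, fun h => ?_⟩
      have := (hF2 x h).2
      omega
    | succ N ih =>
      intro x hx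
      by_cases hxA : x ∈ A
      · have := (hF2 x hxA).2
        obtain ⟨k, hk⟩ := ih (F x) (by omega)
        exact ⟨k + 1, hk⟩
      · exact ⟨0, hxA⟩
  have hF : isF (zg hd) A F :=
    ⟨hF1, fun x hx => nbd_adj.2 (hF2 x hx).1.1, fun x => hexit _ x le_rfl⟩
  refine ⟨F, hF, ?_⟩
  have hsub : eg A F ⊆ T := by
    rintro e ⟨x, hx, rfl⟩
    exact (hF2 x hx).1.2
  have hcard : (eg A F).ncard = (A : Set (V d)).ncard := Set.ncard_image_of_injOn (eg_inj1 hF)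
  have hfin : T.Finite := by
    refine Set.finite_of_ncard_pos ?_
    rw [h2, Set.ncard_coe_finset]
    exact hA.card_pos
  exact Set.eq_of_subset_of_ncard_le hsub (by rw [h2, hcard]) hfin

theorem wST_eq (hd : 0 < d) {A : Finset (V d)} (hA : A.Nonempty) :
    wiredSpanningTrees (A : Set (V d)) = eg A '' (FF (zg hd) A : Set (V d → V d)) := by
  ext T
  constructor
  · intro h
    obtain ⟨F, hF, rfl⟩ := eg_surj hd hA h
    exact ⟨F, (mem_FF _).2 hF, rfl⟩
  · rintro ⟨F, hF, rfl⟩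
    exact eg_mem ((mem_FF _).1 hF)

theorem wST_ncard (hd : 0 < d) {A : Finset (V d)} (hA : A.Nonempty) :
    ((wiredSpanningTrees (A : Set (V d))).ncard : ℝ) = tau (zg hd) A := by
  rw [wST_eq hd hA, Set.ncard_image_of_injOn, Set.ncard_coe_finset]
  · rfl
  · intro F hF F' hF' h
    exact eg_inj ((mem_FF _).1 hF) ((mem_FF _).1 hF') h

theorem ball_BT (A : Finset (V d)) (F : V d → V d) (l : List (V d)) : ∀ x y,
    l.IsChain (fun u w => adj u w ∧ s(u, w) ∈ eg A F) → l.head? = some x → l.getLast? = some y →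
    ∃ a b, a + b + 1 ≤ l.length ∧ F^[a] x = F^[b] y := by
  induction l with
  | nil => intro x y _ h; simp at h
  | cons v l ih =>
    intro x y h1 h2 h3
    simp at h2
    subst h2
    cases l with
    | nil =>
      simp at h3
      subst h3
      exact ⟨0, 0, by simp, rfl⟩
    | cons w l =>
      rw [List.isChain_cons_cons] at h1
      rw [List.getLast?_cons_cons] at h3
      obtain ⟨a, b, hl, hab⟩ := ih w y h1.2 rfl h3
      obtain ⟨z, hz, hzz⟩ := h1.1.2
      simp only [Sym2.eq_iff] at hzz
      rw [List.length_cons]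
      rcases hzz with ⟨rfl, h⟩ | ⟨rfl, h⟩
      · refine ⟨a + 1, b, by omega, ?_⟩
        rw [Function.iterate_succ_apply, h, hab]
      · cases a with
        | zero =>
          refine ⟨0, b + 1, by omega, ?_⟩
          rw [Function.iterate_succ_apply', ← hab]
          exact h.symm
        | succ a =>
          refine ⟨a, b, by omega, ?_⟩
          rw [Function.iterate_succ_apply, h] at hab
          exact hab

noncomputable def KK (d n : ℕ) : Finset (Sym2 (V d)) :=
  (cubeF d n ×ˢ cubeF d n).image (fun p => s(p.1, p.2))

theorem adj_cube {x y : V d} {m : ℕ} (h : adj x y) (hx : x ∈ cubeF d m) : y ∈ cubeF d (m + 1) := by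
  rw [mem_cubeF] at hx ⊢
  intro i
  have h1 : |x i - y i| ≤ 1 := by
    unfold adj at h
    rw [← h]
    exact Finset.single_le_sum (f := fun i => |x i - y i|) (fun _ _ => abs_nonneg _) (Finset.mem_univ i)
  have h2 := hx i
  rw [abs_le] at *
  push_cast
  constructor <;> linarith

theorem cube_mono {m n : ℕ} (h : m ≤ n) : cubeF d m ⊆ cubeF d n := by
  intro x hx
  rw [mem_cubeF] at hx ⊢
  intro i
  exact (hx i).trans (by exact_mod_cast h)

theorem chain_agree {ω ω' : Config d} {n : ℕ} (h : ∀ e ∈ KK d n, ω e = ω' e) (l : List (V d)) :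
    ∀ x m, x ∈ cubeF d m → m + l.length ≤ n + 1 → l.head? = some x →
    l.IsChain (fun u w => adj u w ∧ ω s(u, w) = true) →
    l.IsChain (fun u w => adj u w ∧ ω' s(u, w) = true) := by
  induction l with
  | nil => intro x m _ _ h; simp at h
  | cons v l ih =>
    intro x m hx hm h2 h1
    simp at h2
    subst h2
    cases l with
    | nil => simp
    | cons w l =>
      rw [List.isChain_cons_cons] at h1 ⊢
      simp only [List.length_cons] at hm ih
      have hw := adj_cube h1.1.1 hx
      refine ⟨⟨h1.1.1, ?_⟩, ih w (m + 1) hw (by omega) rfl h1.2⟩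
      rw [← h, h1.1.2]
      exact Finset.mem_image.2 ⟨(v, w), Finset.mem_product.2
        ⟨cube_mono (by omega) hx, cube_mono (by omega) hw⟩, rfl⟩

theorem ball_agree_sub {ω ω' : Config d} {n : ℕ} (h : ∀ e ∈ KK d n, ω e = ω' e) :
    ballU ω n ⊆ ballU ω' n := by
  rintro y ⟨l, h1, h2, h3, h4⟩
  exact ⟨l, chain_agree h l 0 0 (by simp [mem_cubeF]) (by omega) h2 h1, h2, h3, h4⟩

theorem ball_agree {ω ω' : Config d} {n : ℕ} (h : ∀ e ∈ KK d n, ω e = ω' e) :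
    ballU ω n = ballU ω' n :=
  (ball_agree_sub h).antisymm (ball_agree_sub fun e he => (h e he).symm)

noncomputable def ind (s : Set (Sym2 (V d))) : Config d := fun e => decide (e ∈ s)

theorem ball_le (hd : 0 < d) {A : Finset (V d)} {F : V d → V d} (hF : isF (zg hd) A F) (n : ℕ) :
    (ballU (ind (eg A F)) n).ncard ≤ (BT n 0 F).ncard := by
  refine Set.ncard_le_ncard ?_ ?_
  · rintro y ⟨l, h1, h2, h3, h4⟩
    obtain ⟨a, b, hl, hab⟩ := ball_BT A F l 0 y (h1.imp (fun u w h => ⟨h.1, by simpa [ind] using h.2⟩)) h2 h3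
    exact ⟨a, by omega, b, by omega, hab⟩
  · obtain ⟨m, hm, hdp⟩ := dep_ex (zg hd) hF 0
    exact (Finset.finite_toSet _).subset (BT_sub (zg hd) hF hdp hm)

theorem cube_eq (r : ℕ) : cube (0 : V d) r = (cubeF d r : Set (V d)) := by
  ext x
  rw [Finset.mem_coe, mem_cubeF]
  simp [cube]

theorem ratio_bd (hd : 0 < d) (n : ℕ) (t : ℝ) (r : ℕ) (G : Finset (Finset (Sym2 (V d))))
    (hG : ∀ s ∈ G, s ⊆ KK d n ∧ t ≤ ((ballU (ind (s : Set (Sym2 (V d)))) n).ncard : ℝ)) :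
    ∑ s ∈ G, ((Set.ncard { T ∈ wiredSpanningTrees (cube (0 : V d) r) |
            ∀ e ∈ KK d n, (e ∈ T ↔ ind (s : Set (Sym2 (V d))) e = true) } : ℝ) /
         (Set.ncard (wiredSpanningTrees (cube (0 : V d) r)) : ℝ))
      ≤ (((FF (zg hd) (cubeF d r)).filter (fun T => t ≤ ((BT n 0 T).ncard : ℝ))).card : ℝ)
        / tau (zg hd) (cubeF d r) := by
  have h0 : (0 : V d) ∈ cubeF d r := by simp [mem_cubeF]
  have hA : (cubeF d r).Nonempty := ⟨0, h0⟩
  rw [cube_eq, wST_ncard hd hA, ← Finset.sum_div]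
  refine div_le_div_of_nonneg_right ?_ (tau_pos _ _).le
  set A := cubeF d r with hAdef
  have h1 : ∀ s ∈ G, (Set.ncard { T ∈ wiredSpanningTrees (A : Set (V d)) |
            ∀ e ∈ KK d n, (e ∈ T ↔ ind (s : Set (Sym2 (V d))) e = true) } : ℝ)
      ≤ (((FF (zg hd) A).filter (fun F => ∀ e ∈ KK d n, (e ∈ eg A F ↔ e ∈ s))).card : ℝ) := by
    intro s _
    rw [Nat.cast_le, ← Set.ncard_coe_finset]
    refine le_trans (Set.ncard_le_ncard (t := eg A '' (((FF (zg hd) A).filter (fun F => ∀ e ∈ KK d n, (e ∈ eg A F ↔ e ∈ s)) : Finset _) : Set (V d → V d))) ?_ ?_)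
      (Set.ncard_image_le (Finset.finite_toSet _))
    · rintro T ⟨hT, hTs⟩
      rw [wST_eq hd hA] at hT
      obtain ⟨F, hF, rfl⟩ := hT
      refine ⟨F, ?_, rfl⟩
      rw [Finset.mem_coe, Finset.mem_filter]
      exact ⟨hF, fun e he => by simpa [ind] using hTs e he⟩
    · exact (Finset.finite_toSet _).image _
  refine (Finset.sum_le_sum h1).trans ?_
  rw [← Nat.cast_sum, Nat.cast_le, ← Finset.card_biUnion]
  · refine Finset.card_le_card ?_
    intro F hF
    obtain ⟨s, hs, hFs⟩ := Finset.mem_biUnion.1 hF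
    obtain ⟨hF1, hF2⟩ := Finset.mem_filter.1 hFs
    refine Finset.mem_filter.2 ⟨hF1, ?_⟩
    refine (hG s hs).2.trans (Nat.cast_le.2 ?_)
    refine le_trans (le_of_eq ?_) (ball_le hd ((mem_FF _).1 hF1) n)
    rw [ball_agree (ω' := ind (eg A F))]
    intro e he
    simp [ind, hF2 e he]
  · intro s hs s' hs' hne
    rw [Function.onFun, Finset.disjoint_left]
    intro F h1 h2
    apply hne
    have e1 := (Finset.mem_filter.1 h1).2
    have e2 := (Finset.mem_filter.1 h2).2
    ext e
    constructor
    · intro h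
      have := (hG s hs).1 h
      exact (e2 e this).1 ((e1 e this).2 h)
    · intro h
      have := (hG s' hs').1 h
      exact (e1 e this).1 ((e2 e this).2 h)

theorem meas_le (μ : Measure (Config d)) [IsProbabilityMeasure μ] (n : ℕ) (t : ℝ) (C : ℝ)
    (hU : IsUSF μ)
    (hC : ∀ (r : ℕ) (G : Finset (Finset (Sym2 (V d)))),
      (∀ s ∈ G, s ⊆ KK d n ∧ t ≤ ((ballU (ind (s : Set (Sym2 (V d)))) n).ncard : ℝ)) →
      ∑ s ∈ G, ((Set.ncard { T ∈ wiredSpanningTrees (cube (0 : V d) r) |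
            ∀ e ∈ KK d n, (e ∈ T ↔ ind (s : Set (Sym2 (V d))) e = true) } : ℝ) /
         (Set.ncard (wiredSpanningTrees (cube (0 : V d) r)) : ℝ)) ≤ C) :
    (μ { ω | t ≤ ((ballU ω n).ncard : ℝ) }).toReal ≤ C := by
  set G := (KK d n).powerset.filter
    (fun s : Finset (Sym2 (V d)) => t ≤ ((ballU (ind (s : Set (Sym2 (V d)))) n).ncard : ℝ)) with hGdef
  have hG : ∀ s ∈ G, s ⊆ KK d n ∧ t ≤ ((ballU (ind (s : Set (Sym2 (V d)))) n).ncard : ℝ) := by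
    intro s hs
    obtain ⟨a, b⟩ := Finset.mem_filter.1 hs
    exact ⟨Finset.mem_powerset.1 a, b⟩
  have hlim := tendsto_finsetSum G (fun s _ => hU (KK d n) (ind (s : Set (Sym2 (V d)))))
  have h1 := le_of_tendsto hlim (Filter.Eventually.of_forall fun r => hC r G hG)
  refine le_trans ?_ h1
  have hsub : { ω : Config d | t ≤ ((ballU ω n).ncard : ℝ) } ⊆
      ⋃ s ∈ G, cylEvent (KK d n) (ind (s : Set (Sym2 (V d)))) := by
    intro ω hω
    set s := (KK d n).filter (fun e => ω e = true) with hs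
    have hag : ∀ e ∈ KK d n, ω e = ind (s : Set (Sym2 (V d))) e := by
      intro e he
      simp [ind, hs, he]
    refine Set.mem_biUnion (x := s) ?_ hag
    refine Finset.mem_coe.2 (Finset.mem_filter.2 ⟨Finset.mem_powerset.2 (Finset.filter_subset _ _), ?_⟩)
    rw [← ball_agree hag]
    exact hω
  rw [← ENNReal.toReal_sum (fun s _ => measure_ne_top _ _)]
  refine ENNReal.toReal_mono ?_ ?_
  · exact (ENNReal.sum_lt_top.2 fun s _ => measure_lt_top _ _).ne
  · exact (measure_mono hsub).trans (measure_biUnion_finset_le _ _)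

end fin

theorem usf_ball_upper_tail :
    ∀ d : ℕ, 5 ≤ d → ∃ c₁ C₂ : ℝ, 0 < c₁ ∧ 0 < C₂ ∧
      ∀ μ : Measure (Config d), IsProbabilityMeasure μ → IsUSF μ →
      ∀ (n : ℕ) (lam : ℝ), 1 ≤ n → 0 < lam →
        (μ { ω | lam * (n : ℝ) ^ 2 ≤ ((ballU ω n).ncard : ℝ) }).toReal
          ≤ C₂ * Real.exp (-c₁ * lam) := by
  intro d hd5
  have hd : 0 < d := by omega
  obtain ⟨B, hB, hm⟩ := momZ hd hd5
  refine ⟨1 / (8 * B), 2, by positivity, by norm_num, ?_⟩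
  intro μ hμ hU n lam hn hlam
  refine meas_le μ n _ _ hU ?_
  intro r G hG
  refine (ratio_bd hd n _ r G hG).trans ?_
  have h0 : (0 : V d) ∈ cubeF d r := by simp [mem_cubeF]
  rw [div_le_iff₀ (tau_pos _ _)]
  refine (hm n (cubeF d r) 0 h0 _).trans ?_
  refine mul_le_mul_of_nonneg_right ?_ (tau_pos _ _).le
  refine mul_le_mul_of_nonneg_left (Real.exp_le_exp.2 ?_) (by norm_num)
  have hn' : (1 : ℝ) ≤ n := by exact_mod_cast hn
  have : 1 / (8 * B) * lam ≤ lam * (n : ℝ) ^ 2 / (2 * (B * (n + 1) ^ 2)) := by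
    rw [div_mul_eq_mul_div, one_mul, div_le_div_iff₀ (by positivity) (by positivity)]
    have h4 : ((n : ℝ) + 1) ^ 2 ≤ 4 * n ^ 2 := by nlinarith
    have : 0 ≤ lam * B := by positivity
    nlinarith [mul_le_mul_of_nonneg_left h4 this]
  linarith

end USFPaper
end

section
/- Let d ≥ 5 and let L be the chronological loop erasure of a (transient) simple random walk on Z^d started at 0. Let M_N be the number of steps in L until its first hit of ∂_i Q_N. Then there exists a constant C₂, depending only on d, such that E( M_N^k ) ≤ C₂^k · k! · N^{2k} for all k ≥ 0 and N ≥ 1; consequently there exist constants c > 0 and C such that for all λ > 0 and N ≥ 1, P( M_N ≥ λ N² ) ≤ C exp( -c λ ). -/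
open MeasureTheory
open scoped ENNReal Classical

namespace USFPaper

variable {d : ℕ}

/-- Inner boundary `∂ᵢA` of a set `A`. -/
def innerBdry (A : Set (V d)) : Set (V d) := { x | x ∈ A ∧ ∃ y, adj x y ∧ y ∉ A }

/-- The `k`-th coordinate unit vector. -/
def unitVec (k : ℕ) : V d := fun i => if (i : ℕ) = k then 1 else 0

/-- `μ` is the law of simple random walk on `ℤ^d` started at `x`, as a probability
measure on path space: every nearest-neighbour cylinder of length `n` starting at `x`
has probability `(2d)⁻ⁿ`. -/
def IsSRWLaw (μ : Measure (ℕ → V d)) (x : V d) : Prop :=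
  IsProbabilityMeasure μ ∧
  ∀ (n : ℕ) (γ : ℕ → V d), γ 0 = x → (∀ i < n, adj (γ i) (γ (i + 1))) →
    μ { ω | ∀ i ≤ n, ω i = γ i } = (2 * (d : ℝ≥0∞))⁻¹ ^ n

/-- First exit time `τ_A` from `A`, valued in `ℕ∞` (`⊤` if the path never leaves `A`). -/
noncomputable def exitTimeE (A : Set (V d)) (ω : ℕ → V d) : ENat :=
  if h : ∃ j, ω j ∉ A then (Nat.find h : ENat) else ⊤

/-- First hitting time `T_A` of `A`, valued in `ℕ∞`. -/
noncomputable def hitTimeE (A : Set (V d)) (ω : ℕ → V d) : ENat :=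
  if h : ∃ j, ω j ∈ A then (Nat.find h : ENat) else ⊤

/-- First positive hitting time `T⁺_A` of `A`, valued in `ℕ∞`. -/
noncomputable def hitTimePosE (A : Set (V d)) (ω : ℕ → V d) : ENat :=
  if h : ∃ j, 1 ≤ j ∧ ω j ∈ A then (Nat.find h : ENat) else ⊤

/-- First exit time from `A` as a natural number (junk value `0` if the path never exits). -/
noncomputable def exitTime (A : Set (V d)) (ω : ℕ → V d) : ℕ := (exitTimeE A ω).toNat

/-- Index of the first hit of `A` (junk value `0` if `A` is never hit). -/
noncomputable def hitIdx (A : Set (V d)) (γ : ℕ → V d) : ℕ := (hitTimeE A γ).toNat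

/-- First index `≥ t` at which the path lies in `A` (junk value `t`). -/
noncomputable def hitIdxFrom (A : Set (V d)) (t : ℕ) (γ : ℕ → V d) : ℕ :=
  if h : ∃ j, t ≤ j ∧ γ j ∈ A then Nat.find h else t

/-- The path frozen at its first exit from `D`. -/
noncomputable def stopAt (D : Set (V d)) (ω : ℕ → V d) : ℕ → V d :=
  fun j => if (j : ENat) ≤ exitTimeE D ω then ω j else ω (exitTime D ω)

/-- Time of the last visit of the path to the point `ω t`, at or after time `t`
(junk value if there are infinitely many such visits). -/
noncomputable def lastVisit (ω : ℕ → V d) (t : ℕ) : ℕ := sSup { j | t ≤ j ∧ ω j = ω t }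

/-- The times of the chronological loop erasure (last-exit decomposition). -/
noncomputable def leTime (ω : ℕ → V d) : ℕ → ℕ
  | 0 => lastVisit ω 0
  | k + 1 => lastVisit ω (leTime ω k + 1)

/-- Chronological loop erasure of an (infinite, transient) path. -/
noncomputable def infLoopErase (ω : ℕ → V d) : ℕ → V d := fun k => ω (leTime ω k)

/-- The loop erasure `L` of the walk stopped at its first exit from `D`. -/
noncomputable def lerw (D : Set (V d)) (ω : ℕ → V d) : ℕ → V d := infLoopErase (stopAt D ω)

/-- The event `T_A > τ_D`: the walk does not visit `A` at any time up to (and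
including) its first exit from `D`; if it never exits `D`, it never visits `A`. -/
def avoidBeforeExit (D A : Set (V d)) (ω : ℕ → V d) : Prop :=
  ∀ j : ℕ, (j : ENat) ≤ exitTimeE D ω → ω j ∉ A

/-- The event `T⁺_A > τ_D` (visits of `A` at positive times only). -/
def avoidBeforeExitPos (D A : Set (V d)) (ω : ℕ → V d) : Prop :=
  ∀ j : ℕ, 1 ≤ j → (j : ENat) ≤ exitTimeE D ω → ω j ∉ A

/-- The right-hand face (in the first coordinate direction) of the cube `Q(x₀,m)`. -/
def rightFace (x₀ : V d) (m : ℕ) : Set (V d) :=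
  { y | y ∈ cube x₀ m ∧ ∀ i : Fin d, (i : ℕ) = 0 → y i = x₀ i + (m : ℤ) }


/-! ### Helper material -/

def nb (x : V d) (e : Fin d × Bool) : V d :=
  fun j => x j + (if j = e.1 then (if e.2 then 1 else -1) else 0)

lemma adj_nb (x : V d) (e : Fin d × Bool) : adj x (nb x e) := by
  unfold adj nb
  rw [Finset.sum_eq_single e.1]
  · cases e.2 <;> simp
  · intro b _ hb; simp [hb]
  · simp

lemma nb_inj (x : V d) : Function.Injective (nb x) := by
  rintro ⟨i, b⟩ ⟨j, c⟩ h
  have h1 := congrFun h i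
  by_cases hij : i = j
  · subst hij
    cases b <;> cases c <;> simp_all [nb]
  · cases b <;> cases c <;> simp_all [nb]

def Cyl (γ : ℕ → V d) (n : ℕ) : Set (ℕ → V d) := {ω | ∀ i ≤ n, ω i = γ i}

lemma measurableSet_Cyl (γ : ℕ → V d) (n : ℕ) : MeasurableSet (Cyl γ n) := by
  have : Cyl γ n = ⋂ i, ⋂ (_ : i ≤ n), (fun ω : ℕ → V d => ω i) ⁻¹' {γ i} := by
    ext ω; simp [Cyl]
  rw [this]
  exact MeasurableSet.iInter fun i => MeasurableSet.iInter fun _ =>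
    (measurable_pi_apply i) (MeasurableSet.singleton _)

def ext (γ : ℕ → V d) (n : ℕ) (e : Fin d × Bool) : ℕ → V d :=
  Function.update γ (n + 1) (nb (γ n) e)

def NN (γ : ℕ → V d) (n : ℕ) : Prop := γ 0 = 0 ∧ ∀ i < n, adj (γ i) (γ (i + 1))

lemma ext_le (γ : ℕ → V d) (n : ℕ) (e : Fin d × Bool) {i : ℕ} (hi : i ≤ n) :
    ext γ n e i = γ i := by
  unfold ext; rw [Function.update_of_ne]; omega

lemma ext_last (γ : ℕ → V d) (n : ℕ) (e : Fin d × Bool) :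
    ext γ n e (n + 1) = nb (γ n) e := by
  simp [ext]

lemma NN_ext {γ : ℕ → V d} {n : ℕ} (h : NN γ n) (e : Fin d × Bool) :
    NN (ext γ n e) (n + 1) := by
  refine ⟨by rw [ext_le _ _ _ (Nat.zero_le n)]; exact h.1, fun i hi => ?_⟩
  rcases Nat.lt_succ_iff_lt_or_eq.mp hi with h1 | h1
  · rw [ext_le _ _ _ h1.le, ext_le _ _ _ h1]; exact h.2 i h1
  · subst h1; rw [ext_le _ _ _ le_rfl, ext_last]; exact adj_nb _ _

lemma Cyl_ext_subset (γ : ℕ → V d) (n : ℕ) (e : Fin d × Bool) :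
    Cyl (ext γ n e) (n + 1) ⊆ Cyl γ n := fun ω hω i hi => by
  rw [hω i (by omega), ext_le _ _ _ hi]

lemma Cyl_ext_disj (γ : ℕ → V d) (n : ℕ) :
    Pairwise (Function.onFun Disjoint fun e : Fin d × Bool => Cyl (ext γ n e) (n + 1)) := by
  intro e f hef
  refine Set.disjoint_left.mpr fun ω h1 h2 => hef ?_
  have a := h1 (n + 1) le_rfl
  have b := h2 (n + 1) le_rfl
  rw [ext_last] at a b
  exact nb_inj _ (a.symm.trans b)

lemma meas_Cyl {μ : Measure (ℕ → V d)} (hμ : IsSRWLaw μ 0) {γ : ℕ → V d} {n : ℕ}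
    (h : NN γ n) : μ (Cyl γ n) = (2 * (d : ℝ≥0∞))⁻¹ ^ n := hμ.2 n γ h.1 h.2

lemma two_d_mul (hd : 5 ≤ d) : (2 * (d : ℝ≥0∞)) * (2 * (d : ℝ≥0∞))⁻¹ = 1 := by
  apply ENNReal.mul_inv_cancel
  · have : (d : ℝ≥0∞) ≠ 0 := by exact_mod_cast (by omega : d ≠ 0)
    simpa using this
  · exact ENNReal.mul_ne_top (by simp) (by simp)

lemma Cyl_ae {μ : Measure (ℕ → V d)} (hd : 5 ≤ d) (hμ : IsSRWLaw μ 0) {γ : ℕ → V d} {n : ℕ}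
    (h : NN γ n) : Cyl γ n =ᵐ[μ] ⋃ e, Cyl (ext γ n e) (n + 1) := by
  haveI := hμ.1
  symm
  refine ae_eq_of_subset_of_measure_ge (Set.iUnion_subset fun e => Cyl_ext_subset γ n e) ?_
    (MeasurableSet.iUnion fun e => measurableSet_Cyl _ _).nullMeasurableSet (measure_ne_top _ _)
  rw [measure_iUnion (Cyl_ext_disj γ n) (fun e => measurableSet_Cyl _ _), meas_Cyl hμ h]
  simp_rw [meas_Cyl hμ (NN_ext h _)]
  rw [tsum_fintype]
  simp only [Finset.sum_const, Finset.card_univ, Fintype.card_prod, Fintype.card_fin,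
    Fintype.card_bool, nsmul_eq_mul]
  push_cast
  rw [pow_succ', ← mul_assoc, mul_comm (d : ℝ≥0∞) 2, two_d_mul hd, one_mul]

lemma ae_NN {μ : Measure (ℕ → V d)} (hd : 5 ≤ d) (hμ : IsSRWLaw μ 0) (n : ℕ) :
    ∀ᵐ ω ∂μ, NN ω n := by
  haveI := hμ.1
  induction n with
  | zero =>
    have h0 : NN (fun _ => (0 : V d)) 0 := ⟨rfl, by simp⟩
    have := meas_Cyl hμ h0
    rw [pow_zero] at this
    have h2 : ∀ᵐ ω ∂μ, ω ∈ Cyl (fun _ => (0 : V d)) 0 :=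
      (prob_compl_eq_zero_iff (measurableSet_Cyl _ _)).mpr this
    filter_upwards [h2] with ω hω
    exact ⟨hω 0 le_rfl, by simp⟩
  | succ n ih =>
    have key : ∀ p : Fin (n + 1) → V d,
        ∀ᵐ ω ∂μ, NN (fun i => p ⟨min i n, by omega⟩) n →
          ω ∈ Cyl (fun i => p ⟨min i n, by omega⟩) n → NN ω (n + 1) := by
      intro p
      by_cases hp : NN (fun i => p ⟨min i n, by omega⟩) n
      · filter_upwards [Cyl_ae hd hμ hp] with ω hω _ hc
        have hω' : ω ∈ ⋃ e, Cyl (ext (fun i => p ⟨min i n, by omega⟩) n e) (n + 1) :=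
          hω.mp hc
        obtain ⟨e, he⟩ := Set.mem_iUnion.mp hω'
        have hN := NN_ext hp e
        refine ⟨by rw [he 0 (by omega)]; exact hN.1, fun i hi => ?_⟩
        rw [he i (by omega), he (i + 1) (by omega)]
        exact hN.2 i hi
      · exact Filter.Eventually.of_forall fun ω h => absurd h hp
    filter_upwards [ih, ae_all_iff.mpr key] with ω h1 h2
    have hc : ∀ i ≤ n, (fun i => (fun j : Fin (n + 1) => ω j) ⟨min i n, by omega⟩) i = ω i := by
      intro i hi; simp [min_eq_left hi]
    refine h2 (fun j => ω j) ⟨?_, ?_⟩ (fun i hi => (hc i hi).symm)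
    · simpa using h1.1
    · intro i hi
      rw [hc i hi.le, hc (i + 1) hi]; exact h1.2 i hi

lemma markov_bound {μ : Measure (ℕ → V d)} (hd : 5 ≤ d) (hμ : IsSRWLaw μ 0)
    (w h : V d → ℝ≥0∞)
    (hw : ∀ x, w x * ∑ e, h (nb x e) ≤ (2 * (d : ℝ≥0∞)) * h x) (m : ℕ) :
    ∀ (n : ℕ) (γ : ℕ → V d), NN γ n →
      ∫⁻ ω in Cyl γ n, (∏ j ∈ Finset.range m, w (ω (n + j))) * h (ω (n + m)) ∂μ
        ≤ (2 * (d : ℝ≥0∞))⁻¹ ^ n * h (γ n) := by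
  induction m with
  | zero =>
    intro n γ hγ
    rw [setLIntegral_congr_fun (g := fun _ => h (γ n)) (measurableSet_Cyl _ _)]
    · simp [meas_Cyl hμ hγ, mul_comm]
    · intro ω hω
      simp [hω n le_rfl]
  | succ m ih =>
    intro n γ hγ
    rw [setLIntegral_congr (Cyl_ae hd hμ hγ),
      lintegral_iUnion (fun e => measurableSet_Cyl _ _) (Cyl_ext_disj γ n), tsum_fintype]
    have hmeas : ∀ k : ℕ, Measurable fun ω : ℕ → V d =>
        (∏ j ∈ Finset.range m, w (ω (k + j))) * h (ω (k + m)) := by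
      intro k
      refine Measurable.mul (Finset.measurable_prod _ fun j _ => ?_) ?_
      · exact (Measurable.of_discrete (f := w)).comp (measurable_pi_apply _)
      · exact (Measurable.of_discrete (f := h)).comp (measurable_pi_apply _)
    calc _ ≤ ∑ e, w (γ n) * ((2 * (d : ℝ≥0∞))⁻¹ ^ (n + 1) * h (nb (γ n) e)) := by
          refine Finset.sum_le_sum fun e _ => ?_
          rw [setLIntegral_congr_fun (g := fun ω => w (γ n) *
            ((∏ j ∈ Finset.range m, w (ω (n + 1 + j))) * h (ω (n + 1 + m))))
            (measurableSet_Cyl _ _)]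
          · rw [lintegral_const_mul _ (hmeas (n + 1))]
            have := ih (n + 1) _ (NN_ext hγ e)
            rw [ext_last] at this
            gcongr
          · intro ω hω
            have h1 : ω n = γ n := by rw [hω n (by omega), ext_le _ _ _ le_rfl]
            simp only [Finset.prod_range_succ', add_zero, h1]
            rw [mul_comm _ (w (γ n)), mul_assoc]
            congr 2
            · refine Finset.prod_congr rfl fun j _ => ?_
              congr 2; omega
            · congr 2; omega
      _ = (2 * (d : ℝ≥0∞))⁻¹ ^ (n + 1) * (w (γ n) * ∑ e, h (nb (γ n) e)) := by
          rw [Finset.mul_sum, Finset.mul_sum]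
          exact Finset.sum_congr rfl fun e _ => by ring
      _ ≤ (2 * (d : ℝ≥0∞))⁻¹ ^ (n + 1) * ((2 * (d : ℝ≥0∞)) * h (γ n)) := by
          exact mul_le_mul_right (hw _) _
      _ = (2 * (d : ℝ≥0∞))⁻¹ ^ n * h (γ n) := by
          rw [pow_succ, mul_assoc, ← mul_assoc _ (2 * (d : ℝ≥0∞)), mul_comm _ (2 * (d : ℝ≥0∞)),
            two_d_mul hd, one_mul]

/-- squared Euclidean norm -/
noncomputable def r2 (x : V d) : ℝ := ∑ i, ((x i : ℝ)) ^ 2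

lemma r2_nb (x : V d) (e : Fin d × Bool) :
    r2 (nb x e) = r2 x + 1 + (if e.2 then 2 * (x e.1 : ℝ) else -(2 * (x e.1 : ℝ))) := by
  unfold r2 nb
  have : ∀ i, (((x i + (if i = e.1 then (if e.2 then 1 else -1) else 0) : ℤ) : ℝ)) ^ 2
      = (x i : ℝ) ^ 2 + (if i = e.1 then
        (1 + (if e.2 then 2 * (x e.1 : ℝ) else -(2 * (x e.1 : ℝ)))) else 0) := by
    intro i
    by_cases h : i = e.1
    · subst h; cases e.2 <;> simp <;> ring
    · simp [h]
  simp_rw [this, Finset.sum_add_distrib]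
  simp
  ring

lemma term_ineq (R x : ℝ) (hR : 36 ≤ R) (hx : x ^ 2 ≤ R) :
    1 / (R + 1 + 2 * x) + 1 / (R + 1 + -(2 * x)) ≤ 2 / (R + 1) + 9 * x ^ 2 / (R + 1) ^ 3 := by
  have hpos : 0 < (R + 1) ^ 2 - 4 * x ^ 2 := by nlinarith
  have h1 : |2 * x| < R + 1 := by
    apply abs_lt_of_sq_lt_sq _ (by linarith); nlinarith
  have h2 := abs_lt.mp h1
  have e1 : 1 / (R + 1 + 2 * x) + 1 / (R + 1 + -(2 * x))
      = 2 * (R + 1) / ((R + 1) ^ 2 - 4 * x ^ 2) := by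
    have a : R + 1 + 2 * x ≠ 0 := by linarith
    have b : R + 1 + -(2 * x) ≠ 0 := by linarith
    have c : (R + 1) ^ 2 - 4 * x ^ 2 ≠ 0 := hpos.ne'
    rw [div_add_div _ _ a b, div_eq_div_iff (mul_ne_zero a b) c]; ring
  have e2 : 2 / (R + 1) + 9 * x ^ 2 / (R + 1) ^ 3
      = (2 * (R + 1) ^ 2 + 9 * x ^ 2) / (R + 1) ^ 3 := by
    have : R + 1 ≠ 0 := by linarith
    field_simp
  rw [e1, e2, div_le_div_iff₀ hpos (by positivity)]
  have h36 : 36 * x ^ 2 ≤ (R + 1) ^ 2 := by nlinarith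
  nlinarith [mul_nonneg (sq_nonneg x) (sub_nonneg.mpr h36)]

lemma green_ineq (hd : 5 ≤ d) (a : ℝ) (ha : 36 ≤ a) (x : V d) :
    ∑ e, 1 / (a + r2 (nb x e)) ≤
      2 * d * (1 / (a + r2 x) - 1 / (10 * (a + r2 x + 1) ^ 2)) := by
  have hr : 0 ≤ r2 x := Finset.sum_nonneg fun i _ => sq_nonneg _
  set R := a + r2 x with hRdef
  have hR : 36 ≤ R := by linarith
  have hd' : (5 : ℝ) ≤ d := by exact_mod_cast hd
  have hxi : ∀ i, (x i : ℝ) ^ 2 ≤ R := fun i => by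
    have : (x i : ℝ) ^ 2 ≤ r2 x :=
      Finset.single_le_sum (f := fun i => (x i : ℝ) ^ 2) (fun i _ => sq_nonneg _)
        (Finset.mem_univ i)
    linarith
  rw [Fintype.sum_prod_type]
  calc _ ≤ ∑ i : Fin d, (2 / (R + 1) + 9 * (x i : ℝ) ^ 2 / (R + 1) ^ 3) := by
        refine Finset.sum_le_sum fun i _ => ?_
        rw [Fintype.sum_bool, r2_nb, r2_nb]
        have := term_ineq R (x i) hR (hxi i)
        have e1 : a + (r2 x + 1 + 2 * (x i : ℝ)) = R + 1 + 2 * (x i : ℝ) := by rw [hRdef]; ring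
        have e2 : a + (r2 x + 1 + -(2 * (x i : ℝ))) = R + 1 + -(2 * (x i : ℝ)) := by
          rw [hRdef]; ring
        simp only [if_true, Bool.false_eq_true, if_false]
        rw [e1, e2]
        exact this
    _ = d * (2 / (R + 1)) + 9 * r2 x / (R + 1) ^ 3 := by
        rw [Finset.sum_add_distrib, ← Finset.sum_div _ (fun i => 9 * (x i : ℝ) ^ 2),
          ← Finset.mul_sum]
        simp [r2]
    _ ≤ d * (2 / (R + 1)) + 9 * (R + 1) / (R + 1) ^ 3 := by
        gcongr; linarith
    _ ≤ _ := by
        have e : 2 * d * (1 / R - 1 / (10 * (R + 1) ^ 2)) -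
            (d * (2 / (R + 1)) + 9 * (R + 1) / (R + 1) ^ 3)
            = (2 * d * (R + 1) - (9 + d / 5) * R) / (R * (R + 1) ^ 2) := by
          have : R ≠ 0 := by linarith
          have : R + 1 ≠ 0 := by linarith
          field_simp
          ring
        have : 0 ≤ (2 * d * (R + 1) - (9 + d / 5) * R) / (R * (R + 1) ^ 2) := by
          apply div_nonneg
          · nlinarith
          · positivity
        linarith

/-- The Lyapunov function. -/
noncomputable def lyap (N : ℕ) (x : V d) : ℝ := 1 + 36 * (N : ℝ) ^ 2 * (1 / (36 * (N : ℝ) ^ 2 + r2 x))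

noncomputable def theta (d N : ℕ) : ℝ := 1 / ((37 + (d : ℝ)) ^ 2 * (N : ℝ) ^ 2)

noncomputable def wt (N : ℕ) (x : V d) : ℝ := if x ∈ cube 0 N then Real.exp (theta d N) else 1

lemma lyap_one_le (N : ℕ) (x : V d) : 1 ≤ lyap N x := by
  have hr : 0 ≤ r2 x := Finset.sum_nonneg fun i _ => sq_nonneg _
  have : 0 ≤ 36 * (N : ℝ) ^ 2 * (1 / (36 * (N : ℝ) ^ 2 + r2 x)) := by positivity
  unfold lyap; linarith

lemma lyap_le_two (N : ℕ) (hN : 1 ≤ N) (x : V d) : lyap N x ≤ 2 := by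
  have hr : 0 ≤ r2 x := Finset.sum_nonneg fun i _ => sq_nonneg _
  have hN' : (1 : ℝ) ≤ N := by exact_mod_cast hN
  have : 36 * (N : ℝ) ^ 2 * (1 / (36 * (N : ℝ) ^ 2 + r2 x)) ≤ 1 := by
    rw [mul_one_div, div_le_one (by positivity)]; linarith
  unfold lyap; linarith

lemma lyap_step (hd : 5 ≤ d) (N : ℕ) (hN : 1 ≤ N) (x : V d) :
    wt N x * ∑ e, lyap N (nb x e) ≤ 2 * d * lyap N x := by
  have hr : 0 ≤ r2 x := Finset.sum_nonneg fun i _ => sq_nonneg _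
  have hN' : (1 : ℝ) ≤ N := by exact_mod_cast hN
  have hN2 : (1 : ℝ) ≤ (N : ℝ) ^ 2 := by nlinarith
  have hd' : (5 : ℝ) ≤ d := by exact_mod_cast hd
  have hg := green_ineq hd (36 * (N : ℝ) ^ 2) (by linarith) x
  have hsum : ∑ e, lyap N (nb x e) ≤ 2 * d * (lyap N x -
      36 * (N : ℝ) ^ 2 * (1 / (10 * (36 * (N : ℝ) ^ 2 + r2 x + 1) ^ 2))) := by
    have e1 : ∑ e, lyap N (nb x e) =
        2 * d + 36 * (N : ℝ) ^ 2 * ∑ e, 1 / (36 * (N : ℝ) ^ 2 + r2 (nb x e)) := by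
      unfold lyap
      rw [Finset.sum_add_distrib, ← Finset.mul_sum]
      simp [mul_comm]
    rw [e1]
    have := mul_le_mul_of_nonneg_left hg (by positivity : 0 ≤ 36 * (N : ℝ) ^ 2)
    unfold lyap
    linarith
  unfold wt
  split_ifs with hx
  · have hr' : r2 x ≤ d * (N : ℝ) ^ 2 := by
      have : ∀ i ∈ Finset.univ, (x i : ℝ) ^ 2 ≤ (N : ℝ) ^ 2 := by
        intro i _
        have h1 := hx i
        simp only [Pi.zero_apply, sub_zero] at h1
        have h2 : |(x i : ℝ)| ≤ N := by exact_mod_cast h1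
        exact sq_le_sq' (abs_le.mp h2).1 (abs_le.mp h2).2
      have := Finset.sum_le_sum this
      simpa [r2] using this
    set A := 36 * (N : ℝ) ^ 2 * (1 / (10 * (36 * (N : ℝ) ^ 2 + r2 x + 1) ^ 2)) with hA
    have hA1 : 2 * theta d N ≤ A := by
      have : 36 * (N : ℝ) ^ 2 + r2 x + 1 ≤ (37 + d) * (N : ℝ) ^ 2 := by linarith
      have h3 : (36 * (N : ℝ) ^ 2 + r2 x + 1) ^ 2 ≤ ((37 + d) * (N : ℝ) ^ 2) ^ 2 := by
        gcongr
      rw [hA, theta, mul_one_div, mul_one_div, div_le_div_iff₀ (by positivity) (by positivity)]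
      have : 0 ≤ (N : ℝ) ^ 2 := by positivity
      nlinarith
    have hl2 := lyap_le_two N hN x
    have hth : 0 ≤ theta d N := by unfold theta; positivity
    have hle : lyap N x - A ≤ lyap N x * Real.exp (-theta d N) := by
      have := Real.add_one_le_exp (-theta d N)
      have h1 := lyap_one_le N x
      nlinarith
    calc _ ≤ Real.exp (theta d N) * (2 * d * (lyap N x * Real.exp (-theta d N))) := by
          gcongr
          exact hsum.trans (by gcongr)
      _ = 2 * d * lyap N x * (Real.exp (theta d N) * Real.exp (-theta d N)) := by ring
      _ = _ := by rw [← Real.exp_add]; simp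
  · rw [one_mul]
    refine hsum.trans ?_
    have : 0 ≤ 36 * (N : ℝ) ^ 2 * (1 / (10 * (36 * (N : ℝ) ^ 2 + r2 x + 1) ^ 2)) := by
      positivity
    gcongr
    linarith

lemma wt_nonneg (N : ℕ) (x : V d) : 1 ≤ wt N x := by
  unfold wt; split_ifs
  · exact Real.one_le_exp (by unfold theta; positivity)
  · exact le_rfl

/-- Truncated exponential functional. -/
noncomputable def Phi (N m : ℕ) (ω : ℕ → V d) : ℝ≥0∞ :=
  ∏ j ∈ Finset.range m, ENNReal.ofReal (wt N (ω j))

lemma measurable_Phi (N m : ℕ) : Measurable (Phi (d := d) N m) :=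
  Finset.measurable_prod _ fun j _ =>
    (Measurable.of_discrete (f := fun x : V d => ENNReal.ofReal (wt N x))).comp
      (measurable_pi_apply j)

lemma Phi_bound {μ : Measure (ℕ → V d)} (hd : 5 ≤ d) (hμ : IsSRWLaw μ 0) (N m : ℕ)
    (hN : 1 ≤ N) : ∫⁻ ω, Phi N m ω ∂μ ≤ 2 := by
  have h0 : NN (fun _ => (0 : V d)) 0 := ⟨rfl, by simp⟩
  have hw : ∀ x : V d, ENNReal.ofReal (wt N x) * ∑ e, ENNReal.ofReal (lyap N (nb x e))
      ≤ (2 * (d : ℝ≥0∞)) * ENNReal.ofReal (lyap N x) := by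
    intro x
    rw [← ENNReal.ofReal_sum_of_nonneg (fun e _ => (zero_le_one.trans (lyap_one_le N _))),
      ← ENNReal.ofReal_mul (zero_le_one.trans (wt_nonneg N x))]
    have e : (2 * (d : ℝ≥0∞)) = ENNReal.ofReal (2 * d) := by
      rw [ENNReal.ofReal_mul (by norm_num)]; simp
    rw [e, ← ENNReal.ofReal_mul (by positivity)]
    exact ENNReal.ofReal_le_ofReal (lyap_step hd N hN x)
  have := markov_bound hd hμ (fun x => ENNReal.ofReal (wt N x))
    (fun x => ENNReal.ofReal (lyap N x)) hw m 0 _ h0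
  have hc : ∀ᵐ ω ∂μ, ω ∈ Cyl (fun _ => (0 : V d)) 0 := by
    filter_upwards [ae_NN hd hμ 0] with ω h i hi
    rw [Nat.le_zero.mp hi]; exact h.1
  rw [Measure.restrict_eq_self_of_ae_mem hc] at this
  calc _ ≤ _ := lintegral_mono fun ω => ?_
    _ ≤ _ := this
    _ ≤ 2 := ?_
  · simp only [zero_add]
    unfold Phi
    refine le_mul_of_one_le_right' ?_
    rw [← ENNReal.ofReal_one]; exact ENNReal.ofReal_le_ofReal (lyap_one_le _ _)
  · rw [pow_zero, one_mul]
    calc _ ≤ ENNReal.ofReal 2 := ENNReal.ofReal_le_ofReal (lyap_le_two N hN _)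
      _ = 2 := by simp

lemma Phi_mono (N : ℕ) : Monotone (Phi (d := d) N) := by
  refine monotone_nat_of_le_succ fun m ω => ?_
  unfold Phi
  rw [Finset.prod_range_succ]
  refine le_mul_of_one_le_right' ?_
  rw [← ENNReal.ofReal_one]; exact ENNReal.ofReal_le_ofReal (wt_nonneg _ _)

lemma Phi_sup_bound {μ : Measure (ℕ → V d)} (hd : 5 ≤ d) (hμ : IsSRWLaw μ 0) (N : ℕ)
    (hN : 1 ≤ N) : ∫⁻ ω, ⨆ m, Phi N m ω ∂μ ≤ 2 := by
  rw [lintegral_iSup (measurable_Phi N) (Phi_mono N)]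
  exact iSup_le fun m => Phi_bound hd hμ N m hN

lemma Phi_eq (N m : ℕ) (ω : ℕ → V d) : Phi N m ω = ENNReal.ofReal
    (Real.exp (theta d N * ((Finset.range m).filter fun j => ω j ∈ cube 0 N).card)) := by
  unfold Phi wt
  rw [← ENNReal.ofReal_prod_of_nonneg (fun i _ => by split_ifs <;> positivity),
    Finset.prod_ite]
  rw [mul_comm (theta d N), Real.exp_nat_mul]
  simp

lemma stopAt_univ (ω : ℕ → V d) : stopAt Set.univ ω = ω := by
  funext j; simp [stopAt, exitTimeE]

lemma not_mem_of_lt_hitIdx {A : Set (V d)} {γ : ℕ → V d} {i : ℕ} (h : i < hitIdx A γ) :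
    γ i ∉ A := by
  unfold hitIdx hitTimeE at h
  split_ifs at h with hh
  · rw [ENat.toNat_coe] at h
    exact Nat.find_min hh h
  · simp at h

lemma lastVisit_spec {ω : ℕ → V d} {A : Set (V d)} (hfin : {j | ω j ∈ A}.Finite) {t : ℕ}
    (ht : ω t ∈ A) : t ≤ lastVisit ω t ∧ ω (lastVisit ω t) = ω t := by
  have : lastVisit ω t ∈ {j | t ≤ j ∧ ω j = ω t} := by
    refine Nat.sSup_mem ⟨t, le_rfl, rfl⟩ (Set.Finite.bddAbove (hfin.subset ?_))
    rintro j ⟨_, hj⟩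
    simpa [hj] using ht
  exact this

lemma hit_le_occ (N : ℕ) (ω : ℕ → V d) (h0 : ω 0 = 0) (hnn : ∀ i, adj (ω i) (ω (i + 1))) :
    ∃ m, hitIdx (innerBdry (cube 0 N)) (lerw Set.univ ω) ≤
      ((Finset.range m).filter fun j => ω j ∈ cube 0 N).card := by
  unfold lerw
  rw [stopAt_univ]
  set M := hitIdx (innerBdry (cube 0 N)) (infLoopErase ω) with hM
  suffices h : ∃ s : Finset ℕ, M ≤ s.card ∧ ∀ j ∈ s, ω j ∈ cube 0 N by
    obtain ⟨s, hs, hs2⟩ := h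
    refine ⟨s.sup id + 1, hs.trans (Finset.card_le_card fun j hj => ?_)⟩
    simp only [Finset.mem_filter, Finset.mem_range]
    exact ⟨Nat.lt_succ_of_le (Finset.le_sup (f := id) hj), hs2 j hj⟩
  by_cases hfin : {j | ω j ∈ cube 0 N}.Finite
  · have hQ : ∀ j ≤ M, ω (leTime ω j) ∈ cube 0 N ∧ ∀ i < j, leTime ω i < leTime ω j := by
      intro j
      induction j with
      | zero =>
        intro _
        have hz : ω 0 ∈ cube 0 N := by rw [h0]; intro i; simp
        refine ⟨?_, by simp⟩
        show ω (lastVisit ω 0) ∈ _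
        rw [(lastVisit_spec hfin hz).2]; exact hz
      | succ j ih =>
        intro hj
        obtain ⟨h1, h2⟩ := ih (by omega)
        have h3 : ω (leTime ω j) ∉ innerBdry (cube 0 N) :=
          not_mem_of_lt_hitIdx (γ := infLoopErase ω) (hM ▸ hj)
        have h4 : ω (leTime ω j + 1) ∈ cube 0 N := by
          by_contra hcon
          exact h3 ⟨h1, _, hnn _, hcon⟩
        have h5 := lastVisit_spec hfin h4
        have h6 : leTime ω (j + 1) = lastVisit ω (leTime ω j + 1) := rfl
        rw [h6]
        refine ⟨by rw [h5.2]; exact h4, fun i hi => ?_⟩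
        rcases Nat.lt_succ_iff_lt_or_eq.mp hi with h | h
        · have := h2 i h; omega
        · subst h; omega
    refine ⟨(Finset.range M).image (leTime ω), ?_, ?_⟩
    · rw [Finset.card_image_of_injOn, Finset.card_range]
      intro a ha b hb hab
      simp only [Finset.coe_range, Set.mem_Iio] at ha hb
      rcases lt_trichotomy a b with h | h | h
      · exact absurd hab ((hQ b hb.le).2 a h).ne
      · exact h
      · exact absurd hab ((hQ a ha.le).2 b h).ne'
    · intro j hj
      obtain ⟨i, hi, rfl⟩ := Finset.mem_image.mp hj
      exact (hQ i (Finset.mem_range.mp hi).le).1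
  · obtain ⟨s, hs, hc⟩ := Set.Infinite.exists_subset_card_eq hfin M
    exact ⟨s, hc.ge, fun j hj => hs hj⟩

lemma exp_hit_le {μ : Measure (ℕ → V d)} (hd : 5 ≤ d) (hμ : IsSRWLaw μ 0) (N : ℕ) :
    ∀ᵐ ω ∂μ, ENNReal.ofReal (Real.exp (theta d N *
      (hitIdx (innerBdry (cube 0 N)) (lerw Set.univ ω) : ℝ))) ≤ ⨆ m, Phi N m ω := by
  filter_upwards [ae_all_iff.mpr (ae_NN hd hμ)] with ω h
  obtain ⟨m, hm⟩ := hit_le_occ N ω (h 0).1 (fun i => (h (i + 1)).2 i (by omega))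
  refine le_trans ?_ (le_iSup _ m)
  rw [Phi_eq]
  have : 0 ≤ theta d N := by unfold theta; positivity
  gcongr

/-- Lemma 5.6.  Let `d ≥ 5` and let `L` be the chronological loop erasure of the
(transient) simple random walk on `ℤ^d` from `0`, and `M_N` the number of steps of `L`
until its first hit of `∂ᵢQ_N`.  There is `C₂ = C₂(d)` with
`E( M_N^k ) ≤ C₂^k k! N^{2k}` for all `k ≥ 0`, `N ≥ 1`; consequently there are
`c > 0` and `C` with `P( M_N ≥ λ N² ) ≤ C exp(-c λ)` for all `λ > 0`, `N ≥ 1`. -/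
theorem lerw_length_upper_moments_and_tail :
    ∀ d : ℕ, 5 ≤ d → ∃ C₂ : ℝ, 0 < C₂ ∧ ∃ c C : ℝ, 0 < c ∧ 0 < C ∧
      ∀ μ : Measure (ℕ → V d), IsSRWLaw μ 0 →
        (∀ k N : ℕ, 1 ≤ N →
          ∫⁻ ω, ((hitIdx (innerBdry (cube 0 N)) (lerw Set.univ ω) : ℝ≥0∞)) ^ k ∂μ
            ≤ ENNReal.ofReal (C₂ ^ k * (Nat.factorial k : ℝ) * (N : ℝ) ^ (2 * k))) ∧
        (∀ (N : ℕ) (lam : ℝ), 1 ≤ N → 0 < lam →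
          (μ { ω | lam * (N : ℝ) ^ 2 ≤
              ((hitIdx (innerBdry (cube 0 N)) (lerw Set.univ ω) : ℝ)) }).toReal
            ≤ C * Real.exp (-c * lam)) := by
  intro d hd
  refine ⟨2 * (37 + (d : ℝ)) ^ 2, by positivity, 1 / (37 + (d : ℝ)) ^ 2, 2, by positivity,
    by norm_num, fun μ hμ => ⟨fun k N hN => ?_, fun N lam hN hlam => ?_⟩⟩
  · haveI := hμ.1
    have hN' : (0 : ℝ) < N := by exact_mod_cast hN
    have hth : 0 < theta d N := by unfold theta; positivity
    rcases Nat.eq_zero_or_pos k with rfl | hk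
    · simp
    · set B : ℝ := k.factorial / theta d N ^ k with hB
      have hB0 : 0 ≤ B := by positivity
      have hpt : ∀ M : ℕ, ((M : ℝ≥0∞)) ^ k ≤
          ENNReal.ofReal B * ENNReal.ofReal (Real.exp (theta d N * (M : ℝ))) := by
        intro M
        rw [← ENNReal.ofReal_mul hB0, ← ENNReal.ofReal_natCast, ← ENNReal.ofReal_pow (by positivity)]
        apply ENNReal.ofReal_le_ofReal
        have := Real.pow_div_factorial_le_exp (theta d N * (M : ℝ)) (by positivity) k
        rw [div_le_iff₀ (by positivity), mul_pow] at this
        rw [hB, div_mul_eq_mul_div, le_div_iff₀ (by positivity)]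
        linarith
      calc _ ≤ ∫⁻ ω, ENNReal.ofReal B * ⨆ m, Phi N m ω ∂μ := by
            refine lintegral_mono_ae ?_
            filter_upwards [exp_hit_le hd hμ N] with ω hω
            exact (hpt _).trans (by gcongr)
        _ = ENNReal.ofReal B * ∫⁻ ω, ⨆ m, Phi N m ω ∂μ :=
            lintegral_const_mul _ (Measurable.iSup (measurable_Phi N))
        _ ≤ ENNReal.ofReal B * ENNReal.ofReal 2 := by
            gcongr
            simpa using Phi_sup_bound hd hμ N hN
        _ ≤ _ := by
            rw [← ENNReal.ofReal_mul hB0]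
            apply ENNReal.ofReal_le_ofReal
            have e : B = ((37 + (d : ℝ)) ^ 2) ^ k * k.factorial * (N : ℝ) ^ (2 * k) := by
              rw [hB, theta, div_pow, mul_pow, one_pow, pow_mul (N : ℝ)]
              field_simp
            rw [e, mul_pow]
            have h2 : (2 : ℝ) ≤ 2 ^ k := by
              calc (2 : ℝ) = 2 ^ 1 := by norm_num
                _ ≤ 2 ^ k := pow_le_pow_right₀ (by norm_num) hk
            have h3 : 0 ≤ ((37 + (d : ℝ)) ^ 2) ^ k * k.factorial * (N : ℝ) ^ (2 * k) := by
              positivity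
            nlinarith
  · haveI := hμ.1
    have hN' : (0 : ℝ) < N := by exact_mod_cast hN
    have hth : 0 < theta d N := by unfold theta; positivity
    set E := ENNReal.ofReal (Real.exp (1 / (37 + (d : ℝ)) ^ 2 * lam)) with hE
    have h1 : μ { ω | lam * (N : ℝ) ^ 2 ≤
        ((hitIdx (innerBdry (cube 0 N)) (lerw Set.univ ω) : ℝ)) }
        ≤ μ {ω | E ≤ ⨆ m, Phi N m ω} := by
      refine measure_mono_ae ?_
      filter_upwards [exp_hit_le hd hμ N] with ω hω hM
      refine le_trans ?_ hω
      apply ENNReal.ofReal_le_ofReal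
      apply Real.exp_le_exp.mpr
      calc 1 / (37 + (d : ℝ)) ^ 2 * lam = theta d N * (lam * (N : ℝ) ^ 2) := by
            unfold theta; field_simp
        _ ≤ _ := mul_le_mul_of_nonneg_left hM hth.le
    have h2 := mul_meas_ge_le_lintegral (μ := μ)
      (Measurable.iSup (measurable_Phi (d := d) N)) E
    have h3 : E * μ { ω | lam * (N : ℝ) ^ 2 ≤
        ((hitIdx (innerBdry (cube 0 N)) (lerw Set.univ ω) : ℝ)) } ≤ 2 :=
      (mul_le_mul_right h1 E).trans (h2.trans (Phi_sup_bound hd hμ N hN))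
    have h4 := ENNReal.toReal_mono (by simp) h3
    rw [ENNReal.toReal_mul, hE, ENNReal.toReal_ofReal (Real.exp_pos _).le] at h4
    simp only [ENNReal.toReal_ofNat] at h4
    rw [neg_mul, Real.exp_neg, ← div_eq_mul_inv, le_div_iff₀ (Real.exp_pos _), mul_comm]
    exact h4

end USFPaper
end
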